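/- If β ∈ F̃ and q(β) < 0, then β is a positive root of the quiver Q. -/

import Mathlib

open Polynomial Matrix BigOperators

namespace DS

noncomputable section

/-- The data of a collection of HTL normal forms `B⁽ⁱ⁾`, `i = 0,…,p`, on `ℂⁿ`:
block counts `m i`, pole orders `kk i`, block sizes `nn i j`, irregular parts
`q i j ∈ s²ℂ[s]` (pairwise distinct, degree ≤ kk i), residue blocks `R i j`,
chosen annihilating eigenvalue lists `ξ i j`, and an identification of
`Σ j, Fin (nn i j)` with `Fin n` (the block decomposition of `ℂⁿ`). -/
structure Setup where
  p : ℕ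
  n : ℕ
  hn : 0 < n
  m : Fin (p+1) → ℕ
  hm : ∀ i, 0 < m i
  kk : Fin (p+1) → ℕ
  hkk : ∀ i, 0 < kk i
  nn : ∀ i : Fin (p+1), Fin (m i) → ℕ
  q : ∀ i : Fin (p+1), Fin (m i) → Polynomial ℂ
  hq0 : ∀ i j, (q i j).coeff 0 = 0
  hq1 : ∀ i j, (q i j).coeff 1 = 0
  hqdeg : ∀ i j, (q i j).natDegree ≤ kk i
  hqdist : ∀ i : Fin (p+1), ∀ j j' : Fin (m i), j ≠ j' → q i j ≠ q i j'
  e : ∀ i : Fin (p+1), Fin (m i) → ℕ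
  he : ∀ i j, 0 < e i j
  xi : ∀ (i : Fin (p+1)) (j : Fin (m i)), Fin (e i j) → ℂ
  R : ∀ (i : Fin (p+1)) (j : Fin (m i)), Matrix (Fin (nn i j)) (Fin (nn i j)) ℂ
  hxi : ∀ i j, (((List.finRange (e i j)).map fun l => R i j - xi i j l • 1).prod) = 0
  emb : ∀ i : Fin (p+1), (Σ j : Fin (m i), Fin (nn i j)) ≃ Fin n
  hreg : ∀ i : Fin (p+1), ¬ (1 < m i ∨ i = 0) → kk i = 1

/-- `i ∈ I_irr` : the indices of irregular singular points together with `0`. -/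
def Iirr (S : Setup) (i : Fin (S.p+1)) : Prop := 1 < S.m i ∨ i = 0

instance (S : Setup) : DecidablePred (Iirr S) := fun i =>
  inferInstanceAs (Decidable (1 < S.m i ∨ i = 0))

/-- Vertices `[i,j]` for `i ∈ I_irr`. -/
abbrev Vb (S : Setup) := Σ i : {i : Fin (S.p+1) // Iirr S i}, Fin (S.m i.1)

/-- Vertices `[i,j,k]` for `0 ≤ i ≤ p`, `1 ≤ j ≤ m⁽ⁱ⁾`, `1 ≤ k ≤ e[i,j]-1`
(the third component `κ` encodes `k = κ+1`). -/
abbrev Vr (S : Setup) := Σ i : Fin (S.p+1), Σ j : Fin (S.m i), Fin (S.e i j - 1)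

/-- The vertex set `Q₀` of the quiver `Q`. -/
abbrev V (S : Setup) := Vb S ⊕ Vr S

/-- `d_i(j,j') = deg (q_j - q_j') - 2`. -/
def dcnt (S : Setup) (i : Fin (S.p+1)) (j j' : Fin (S.m i)) : ℕ :=
  (S.q i j - S.q i j').natDegree - 2

/-- The number of arrows of `Q` from a vertex `a` to a vertex `b`. -/
def arr (S : Setup) : V S → V S → ℕ
  | .inl ⟨i, j⟩, .inl ⟨i', j'⟩ =>
      (if i.1 = 0 ∧ i'.1 ≠ 0 then 1 else 0) +
      (if h : i = i' then
        (if (j : ℕ) < (j' : ℕ) then dcnt S i.1 j (Fin.cast (by rw [h]) j') else 0)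
       else 0)
  | .inl _, .inr _ => 0
  | .inr ⟨i, j, κ⟩, .inl ⟨i', j'⟩ =>
      (if i = i'.1 ∧ (j : ℕ) = (j' : ℕ) ∧ (κ : ℕ) = 0 then 1 else 0) +
      (if ¬ Iirr S i ∧ i'.1 = 0 ∧ (j : ℕ) = 0 ∧ (κ : ℕ) = 0 then 1 else 0)
  | .inr ⟨i, j, κ⟩, .inr ⟨i', j', κ'⟩ =>
      if i = i' ∧ (j : ℕ) = (j' : ℕ) ∧ (κ : ℕ) = (κ' : ℕ) + 1 then 1 else 0

/-- The Euler form `⟨β,γ⟩` of the quiver `Q`. -/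
def eform (S : Setup) (β γ : V S → ℤ) : ℤ :=
  (∑ a : V S, β a * γ a) - ∑ a : V S, ∑ b : V S, (arr S a b : ℤ) * β a * γ b

/-- The symmetrized bilinear form `(β,γ)`. -/
def bform (S : Setup) (β γ : V S → ℤ) : ℤ := eform S β γ + eform S γ β

/-- The quadratic form `q(β)`. -/
def qform (S : Setup) (β : V S → ℤ) : ℤ := eform S β β

/-- `p(β) = 1 - q(β)`. -/
def pform (S : Setup) (β : V S → ℤ) : ℤ := 1 - qform S β

/-- The coordinate vector `ε_a`. -/
def eps (S : Setup) (a : V S) : V S → ℤ := fun b => if b = a then 1 else 0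

/-- The fundamental reflection `s_a`. -/
def refl1 (S : Setup) (a : V S) (β : V S → ℤ) : V S → ℤ :=
  fun b => β b - bform S β (eps S a) * eps S a b

/-- Iterated fundamental reflections (a Weyl group element). -/
def reflList (S : Setup) (l : List (V S)) (β : V S → ℤ) : V S → ℤ :=
  l.foldr (refl1 S) β

/-- The support of a vector. -/
def supp (S : Setup) (β : V S → ℤ) : Set (V S) := {a | β a ≠ 0}

/-- The support of `β` is connected in the underlying graph of `Q`. -/
def connSupp (S : Setup) (β : V S → ℤ) : Prop :=
  ∀ a ∈ supp S β, ∀ b ∈ supp S β,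
    Relation.ReflTransGen
      (fun x y => (0 < arr S x y + arr S y x) ∧ x ∈ supp S β ∧ y ∈ supp S β) a b

/-- The fundamental set of the root system of `Q` (all vertices of `Q` are loop-free). -/
def fund (S : Setup) (β : V S → ℤ) : Prop :=
  β ≠ 0 ∧ (∀ a, 0 ≤ β a) ∧ connSupp S β ∧ ∀ a : V S, bform S β (eps S a) ≤ 0

/-- Real roots of `Q`. -/
def isRealRoot (S : Setup) (β : V S → ℤ) : Prop :=
  ∃ (l : List (V S)) (a : V S), β = reflList S l (eps S a)

/-- Imaginary roots of `Q`. -/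
def isImagRoot (S : Setup) (β : V S → ℤ) : Prop :=
  ∃ (l : List (V S)) (γ : V S → ℤ), (fund S γ ∨ fund S (-γ)) ∧ β = reflList S l γ

/-- Roots of `Q`. -/
def isRoot (S : Setup) (β : V S → ℤ) : Prop := isRealRoot S β ∨ isImagRoot S β

/-- Positive roots of `Q`. -/
def isPosRoot (S : Setup) (β : V S → ℤ) : Prop := isRoot S β ∧ ∀ a, 0 ≤ β a

/-- The index `0` as an element of `I_irr`. -/
def i0 (S : Setup) : {i : Fin (S.p+1) // Iirr S i} := ⟨0, Or.inr rfl⟩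

/-- The vertex `[0,j]`. -/
def v0 (S : Setup) (j : Fin (S.m 0)) : V S := Sum.inl ⟨i0 S, j⟩

/-- The vertex `[i,j]` for `i ∈ I_irr`. -/
def vI (S : Setup) (i : {i : Fin (S.p+1) // Iirr S i}) (j : Fin (S.m i.1)) : V S :=
  Sum.inl ⟨i, j⟩

/-- The lattice `L`: `Σ_j β_[0,j] = Σ_j β_[i,j]` for all `i ∈ I_irr ∖ {0}`. -/
def inL (S : Setup) (β : V S → ℤ) : Prop :=
  ∀ i : {i : Fin (S.p+1) // Iirr S i}, i.1 ≠ 0 →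
    (∑ j : Fin (S.m 0), β (v0 S j)) = ∑ j : Fin (S.m i.1), β (vI S i j)

/-- `L⁺ = L ∩ (ℤ≥0)^{Q₀}`. -/
def inLpos (S : Setup) (β : V S → ℤ) : Prop := inL S β ∧ ∀ a, 0 ≤ β a

/-- The dimension vector `α` (as natural numbers):
`α_[i,j] = n⁽ⁱ⁾_j`, `α_[i,j,k] = rank ∏_{l=1}^k (R⁽ⁱ⁾_j - ξ^{[i,j]}_l)`. -/
noncomputable def alN (S : Setup) : V S → ℕ
  | .inl ⟨i, j⟩ => S.nn i.1 j
  | .inr ⟨i, j, κ⟩ =>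
      ((((List.finRange (S.e i j)).take ((κ : ℕ) + 1)).map
          fun l => S.R i j - S.xi i j l • 1).prod).rank

/-- The dimension vector `α` as an integer vector. -/
noncomputable def alZ (S : Setup) : V S → ℤ := fun a => (alN S a : ℤ)

/-- The parameter `λ ∈ ℂ^{Q₀}`. -/
noncomputable def lam (S : Setup) : V S → ℂ
  | .inl ⟨i, j⟩ =>
      if h : i.1 = 0 then
        (- S.xi 0 (Fin.cast (by rw [h]) j) ⟨0, S.he 0 (Fin.cast (by rw [h]) j)⟩)
          - ∑ i' ∈ Finset.univ.filter (fun i' : Fin (S.p+1) => ¬ Iirr S i'),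
              S.xi i' ⟨0, S.hm i'⟩ ⟨0, S.he i' ⟨0, S.hm i'⟩⟩
      else - S.xi i.1 j ⟨0, S.he i.1 j⟩
  | .inr ⟨i, j, κ⟩ =>
      S.xi i j ⟨(κ : ℕ), by have := κ.2; omega⟩
        - S.xi i j ⟨(κ : ℕ) + 1, by have := κ.2; omega⟩

/-- Pairing `β · μ = Σ_a β_a μ_a` between `ℤ^{Q₀}` and `ℂ^{Q₀}`. -/
noncomputable def dotC (S : Setup) (β : V S → ℤ) (μ : V S → ℂ) : ℂ :=
  ∑ a : V S, (β a : ℂ) * μ a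

/-- `β ∈ R̃⁺_μ` : positive roots of `Q` lying in `L` with `β·μ = 0`. -/
def inRt (S : Setup) (μ : V S → ℂ) (β : V S → ℤ) : Prop :=
  isPosRoot S β ∧ inL S β ∧ dotC S β μ = 0

/-- `β ∈ ℕR̃⁺_μ` : finite sums (including `0`) of elements of `R̃⁺_μ`. -/
def inNRt (S : Setup) (μ : V S → ℂ) (β : V S → ℤ) : Prop :=
  ∃ (r : ℕ) (γ : Fin r → (V S → ℤ)), (∀ t, inRt S μ (γ t)) ∧ β = ∑ t, γ t

/-- `β ∈ Σ̃_μ`. -/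
def inSig (S : Setup) (μ : V S → ℂ) (β : V S → ℤ) : Prop :=
  inRt S μ β ∧ ∀ (r : ℕ), 2 ≤ r → ∀ γ : Fin r → (V S → ℤ),
    (∀ t, inRt S μ (γ t)) → β = ∑ t, γ t → (∑ t, pform S (γ t)) < pform S β

/-! ### The matrix side: truncated orbits.

An element `Σ_{j=1}^{k} A_j x^{-j}` of `𝔤_k*` is encoded as the polynomial matrix
`Σ_{j=1}^{k} A_j x^{k-j}` (of degree `< k`); the coadjoint `G_k`-action becomes
conjugation modulo `x^k` by polynomial matrices with invertible constant term. -/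

abbrev PMat (S : Setup) := Matrix (Fin S.n) (Fin S.n) (Polynomial ℂ)

/-- All entries have degree `< k`. -/
def degLT (S : Setup) (k : ℕ) (A : PMat S) : Prop :=
  ∀ a b, (A a b).degree < (k : ℕ)

/-- The HTL normal form `B⁽ⁱ⁾`, in the polynomial encoding. -/
noncomputable def Bmat (S : Setup) (i : Fin (S.p+1)) : PMat S :=
  Matrix.of fun a b =>
    if h : ((S.emb i).symm a).1 = ((S.emb i).symm b).1 then
      (if Fin.cast (by rw [h]) ((S.emb i).symm a).2 = ((S.emb i).symm b).2 then
          Polynomial.reflect (S.kk i) (S.q i ((S.emb i).symm b).1)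
        else 0)
        + Polynomial.C
            (S.R i ((S.emb i).symm b).1 (Fin.cast (by rw [h]) ((S.emb i).symm a).2)
              ((S.emb i).symm b).2)
          * Polynomial.X ^ (S.kk i - 1)
    else 0

/-- Membership in the truncated orbit `𝒪_{B⁽ⁱ⁾}`. -/
def inOrbit (S : Setup) (i : Fin (S.p+1)) (A : PMat S) : Prop :=
  degLT S (S.kk i) A ∧
  ∃ g : PMat S, IsUnit (g.map fun r => r.coeff 0) ∧
    ∀ a b, (Polynomial.X ^ (S.kk i) : Polynomial ℂ) ∣ (g * Bmat S i - A * g) a b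

/-- The residue matrix `A⁽ⁱ⁾₁`. -/
def resMat (S : Setup) (i : Fin (S.p+1)) (A : PMat S) : Matrix (Fin S.n) (Fin S.n) ℂ :=
  Matrix.of fun a b => (A a b).coeff (S.kk i - 1)

/-- `(A⁽ⁱ⁾)_{0≤i≤p} ∈ ∏ 𝒪_{B⁽ⁱ⁾}` with `Σ A⁽ⁱ⁾₁ = 0`. -/
def isDSElem (S : Setup) (A : ∀ _ : Fin (S.p+1), PMat S) : Prop :=
  (∀ i, inOrbit S i (A i)) ∧ (∑ i, resMat S i (A i)) = 0

/-- Irreducibility of the collection of all coefficient matrices `A⁽ⁱ⁾_j`. -/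
def irredTuple (S : Setup) (A : ∀ _ : Fin (S.p+1), PMat S) : Prop :=
  ∀ W : Submodule ℂ (Fin S.n → ℂ),
    (∀ (i : Fin (S.p+1)) (l : ℕ), ∀ v ∈ W,
        (Matrix.of fun a b => (A i a b).coeff l).mulVec v ∈ W) →
    W = ⊥ ∨ W = ⊤

/-! ### Representations of the double quiver -/

/-- A representation of the double quiver `Q̄` with dimension vector `β`:
`f a b ρ` is the matrix of `ψ_ρ : ℂ^{β a} → ℂ^{β b}` and `g a b ρ` the matrix of
`ψ_{ρ*} : ℂ^{β b} → ℂ^{β a}`, for the `ρ`-th arrow `a → b` of `Q`. -/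
structure Rep (S : Setup) (β : V S → ℕ) where
  f : ∀ a b : V S, Fin (arr S a b) → Matrix (Fin (β b)) (Fin (β a)) ℂ
  g : ∀ a b : V S, Fin (arr S a b) → Matrix (Fin (β a)) (Fin (β b)) ℂ

/-- The moment map at a vertex `c`. -/
noncomputable def moment (S : Setup) {β : V S → ℕ} (M : Rep S β) (c : V S) :
    Matrix (Fin (β c)) (Fin (β c)) ℂ :=
  (∑ a : V S, ∑ ρ : Fin (arr S a c), M.f a c ρ * M.g a c ρ)
    - ∑ b : V S, ∑ ρ : Fin (arr S c b), M.g c b ρ * M.f c b ρ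

/-- `M ∈ Rep(Q̄,β)_μ`. -/
def onMu (S : Setup) {β : V S → ℕ} (μ : V S → ℂ) (M : Rep S β) : Prop :=
  ∀ c : V S, moment S M c = μ c • (1 : Matrix (Fin (β c)) (Fin (β c)) ℂ)

/-- The block matrix `(ψ_{ρ^{[0,j]}_{[i,j']}})_{j,j'}` for `i ∈ I_irr ∖ {0}`. -/
noncomputable def crossMat (S : Setup) {β : V S → ℕ} (M : Rep S β)
    (i : {i : Fin (S.p+1) // Iirr S i}) :
    Matrix (Σ j' : Fin (S.m i.1), Fin (β (vI S i j'))) (Σ j : Fin (S.m 0), Fin (β (v0 S j))) ℂ :=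
  Matrix.of fun x y =>
    if h : 0 < arr S (v0 S y.1) (vI S i x.1) then
      M.f (v0 S y.1) (vI S i x.1) ⟨0, h⟩ x.2 y.2
    else 0

/-- All the block matrices `(ψ_{ρ^{[0,j]}_{[i,j']}})` for `i ∈ I_irr ∖ {0}` are invertible. -/
def crossBij (S : Setup) {β : V S → ℕ} (M : Rep S β) : Prop :=
  ∀ i : {i : Fin (S.p+1) // Iirr S i}, i.1 ≠ 0 →
    Function.Bijective ((crossMat S M i).mulVec)

/-- The combined map `(ψ_{ρ^{[i,1,1]}_{[0,j]}})_j : ℂ^{β [i,1,1]} → ⊕_j ℂ^{β [0,j]}`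
(for `i ∈ I_reg`). -/
noncomputable def regMatF (S : Setup) {β : V S → ℕ} (M : Rep S β)
    (i : Fin (S.p+1)) (j : Fin (S.m i)) (κ : Fin (S.e i j - 1)) :
    Matrix (Σ j' : Fin (S.m 0), Fin (β (v0 S j'))) (Fin (β (Sum.inr ⟨i, j, κ⟩))) ℂ :=
  Matrix.of fun x y =>
    if h : 0 < arr S (Sum.inr ⟨i, j, κ⟩) (v0 S x.1) then
      M.f (Sum.inr ⟨i, j, κ⟩) (v0 S x.1) ⟨0, h⟩ x.2 y
    else 0

/-- The combined map `(ψ_{(ρ^{[i,1,1]}_{[0,j]})*})_j : ⊕_j ℂ^{β [0,j]} → ℂ^{β [i,1,1]}`. -/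
noncomputable def regMatG (S : Setup) {β : V S → ℕ} (M : Rep S β)
    (i : Fin (S.p+1)) (j : Fin (S.m i)) (κ : Fin (S.e i j - 1)) :
    Matrix (Fin (β (Sum.inr ⟨i, j, κ⟩))) (Σ j' : Fin (S.m 0), Fin (β (v0 S j'))) ℂ :=
  Matrix.of fun y x =>
    if h : 0 < arr S (Sum.inr ⟨i, j, κ⟩) (v0 S x.1) then
      M.g (Sum.inr ⟨i, j, κ⟩) (v0 S x.1) ⟨0, h⟩ y x.2
    else 0

/-- `M ∈ Rep(Q̄,β)_μ^{dif}` (the open conditions). -/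
def difCond (S : Setup) {β : V S → ℕ} (M : Rep S β) : Prop :=
  crossBij S M ∧
  (∀ (i : Fin (S.p+1)), ¬ Iirr S i → ∀ (j : Fin (S.m i)) (κ : Fin (S.e i j - 1)),
      (κ : ℕ) = 0 →
      Function.Injective ((regMatF S M i j κ).mulVec) ∧
      Function.Surjective ((regMatG S M i j κ).mulVec)) ∧
  (∀ (i : Fin (S.p+1)) (j : Fin (S.m i)) (κ : Fin (S.e i j - 1)) (b : V S)
      (ρ : Fin (arr S (Sum.inr ⟨i, j, κ⟩) b)),
      (¬ Iirr S i ∧ (κ : ℕ) = 0) ∨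
      (Function.Injective ((M.f (Sum.inr ⟨i, j, κ⟩) b ρ).mulVec) ∧
       Function.Surjective ((M.g (Sum.inr ⟨i, j, κ⟩) b ρ).mulVec)))

/-- A family of subspaces forming a subrepresentation of `M`. -/
def isSubrep (S : Setup) {β : V S → ℕ} (M : Rep S β)
    (W : ∀ a : V S, Submodule ℂ (Fin (β a) → ℂ)) : Prop :=
  ∀ (a b : V S) (ρ : Fin (arr S a b)),
    (∀ v ∈ W a, (M.f a b ρ).mulVec v ∈ W b) ∧ (∀ v ∈ W b, (M.g a b ρ).mulVec v ∈ W a)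

/-- Irreducibility of a representation. -/
def irredRep (S : Setup) {β : V S → ℕ} (M : Rep S β) : Prop :=
  ∀ W, isSubrep S M W → (∀ a, W a = ⊥) ∨ (∀ a, W a = ⊤)

/-- A dimension vector is balanced if `Σ_j γ_[0,j] = Σ_j γ_[i,j]` for all `i ∈ I_irr∖{0}`. -/
def balanced (S : Setup) (γ : V S → ℕ) : Prop :=
  ∀ i : {i : Fin (S.p+1) // Iirr S i}, i.1 ≠ 0 →
    (∑ j : Fin (S.m 0), γ (v0 S j)) = ∑ j : Fin (S.m i.1), γ (vI S i j)

/-- Quasi-irreducibility: no nontrivial proper subrepresentation with balanced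
dimension vector. -/
def quasiIrred (S : Setup) {β : V S → ℕ} (M : Rep S β) : Prop :=
  ∀ W, isSubrep S M W → balanced S (fun a => Module.finrank ℂ (W a)) →
    (∀ a, W a = ⊥) ∨ (∀ a, W a = ⊤)

/-- Simultaneous conjugation of representations by `∏_a GL(β_a, ℂ)`. -/
def repConj (S : Setup) {β : V S → ℕ} (M N : Rep S β) : Prop :=
  ∃ g : ∀ a : V S, (Matrix (Fin (β a)) (Fin (β a)) ℂ)ˣ,
    (∀ a b ρ, N.f a b ρ = ((g b).val * M.f a b ρ) * ((g a)⁻¹).val) ∧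
    (∀ a b ρ, N.g a b ρ = ((g a).val * M.g a b ρ) * ((g b)⁻¹).val)

/-- Simultaneous conjugation of tuples by `GL(n, ℂ)`. -/
def tupConj (S : Setup) (A A' : ∀ _ : Fin (S.p+1), PMat S) : Prop :=
  ∃ g : (Matrix (Fin S.n) (Fin S.n) ℂ)ˣ,
    ∀ i, A' i = (g.val.map Polynomial.C) * A i * ((g⁻¹).val.map Polynomial.C)

/-- Carrier of the moduli space `ℳ*_{st}(𝐁)`. -/
abbrev MstC (S : Setup) := {A : ∀ _ : Fin (S.p+1), PMat S // isDSElem S A ∧ irredTuple S A}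

/-- The moduli space `ℳ*_{st}(𝐁)` of stable connections, identified with conjugacy
classes of irreducible elements of `∏ 𝒪_{B⁽ⁱ⁾}` with vanishing residue sum. -/
abbrev Mst (S : Setup) := Quot (fun A A' : MstC S => tupConj S A.1 A'.1)

abbrev DSC (S : Setup) := {A : ∀ _ : Fin (S.p+1), PMat S // isDSElem S A}

abbrev DSQ (S : Setup) := Quot (fun A A' : DSC S => tupConj S A.1 A'.1)

abbrev RepIrrC (S : Setup) (μ : V S → ℂ) :=
  {M : Rep S (alN S) // onMu S μ M ∧ irredRep S M}

/-- The quiver variety `𝔐^{reg}_μ(Q,α)`. -/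
abbrev Mreg (S : Setup) (μ : V S → ℂ) :=
  Quot (fun M N : RepIrrC S μ => repConj S M.1 N.1)

abbrev DifC (S : Setup) (μ : V S → ℂ) :=
  {M : Rep S (alN S) // onMu S μ M ∧ difCond S M}

abbrev DifQ (S : Setup) (μ : V S → ℂ) :=
  Quot (fun M N : DifC S μ => repConj S M.1 N.1)

abbrev QIC (S : Setup) (μ : V S → ℂ) :=
  {M : Rep S (alN S) // onMu S μ M ∧ quasiIrred S M ∧ crossBij S M}

abbrev QIQ (S : Setup) (μ : V S → ℂ) :=
  Quot (fun M N : QIC S μ => repConj S M.1 N.1)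

/-! ### `J`, `ε_𝐢`, and the equivalence relation `∼` -/

/-- `ε_𝐢 = Σ_{i ∈ I_irr} ε_{[i,j_i]}` for `𝐢 = ([i,j_i]) ∈ 𝒥`. -/
def epsJ (S : Setup) (I : ∀ i : Fin (S.p+1), Fin (S.m i)) : V S → ℤ
  | .inl ⟨i, j⟩ => if (j : ℕ) = (I i.1 : ℕ) then 1 else 0
  | .inr _ => 0

/-- The reflection `s_𝐢`. -/
def sJ (S : Setup) (I : ∀ i : Fin (S.p+1), Fin (S.m i)) (β : V S → ℤ) : V S → ℤ :=
  fun b => β b - bform S β (epsJ S I) * epsJ S I b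

/-- The quasi-fundamental set `F̃`. -/
def quasiFund (S : Setup) (β : V S → ℤ) : Prop :=
  inL S β ∧ (∀ a, 0 ≤ β a) ∧ β ≠ 0 ∧
  (∀ I : ∀ i : Fin (S.p+1), Fin (S.m i), bform S β (epsJ S I) ≤ 0) ∧
  (∀ (i : Fin (S.p+1)) (j : Fin (S.m i)) (κ : Fin (S.e i j - 1)),
      bform S β (eps S (Sum.inr ⟨i, j, κ⟩)) ≤ 0) ∧
  connSupp S β

/-- `μ_𝐢 = Σ_{i ∈ I_irr} μ_{[i,j_i]}`. -/
noncomputable def muJ (S : Setup) (I : ∀ i : Fin (S.p+1), Fin (S.m i)) (μ : V S → ℂ) : ℂ :=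
  ∑ i : {i : Fin (S.p+1) // Iirr S i}, μ (vI S i (I i.1))

/-- The transformed parameter `μ'` in the move `s_𝐢` on pairs. -/
noncomputable def muMove (S : Setup) (I : ∀ i : Fin (S.p+1), Fin (S.m i)) (μ : V S → ℂ) :
    V S → ℂ := fun a =>
  match a with
  | .inl ⟨i, j⟩ =>
      if i.1 = 0 ∧ (j : ℕ) = (I 0 : ℕ) then μ a - 2 * muJ S I μ else μ a
  | .inr ⟨i, j, κ⟩ =>
      if j = I i ∧ (κ : ℕ) = 0 then μ a + muJ S I μ else μ a

/-- The reflected parameter `r_a(μ)` for a vertex `a`. -/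
noncomputable def rvtx (S : Setup) (a : V S) (μ : V S → ℂ) : V S → ℂ :=
  fun b => μ b - ((bform S (eps S a) (eps S b) : ℤ) : ℂ) * μ a

/-- One move generating the relation `∼` on pairs `(β,μ)`. -/
def stepRel (S : Setup) :
    ((V S → ℤ) × (V S → ℂ)) → ((V S → ℤ) × (V S → ℂ)) → Prop := fun x y =>
  (∃ (i : Fin (S.p+1)) (j : Fin (S.m i)) (κ : Fin (S.e i j - 1)),
      x.2 (Sum.inr ⟨i, j, κ⟩) ≠ 0 ∧
      y = (refl1 S (Sum.inr ⟨i, j, κ⟩) x.1, rvtx S (Sum.inr ⟨i, j, κ⟩) x.2)) ∨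
  (∃ I : ∀ i : Fin (S.p+1), Fin (S.m i),
      muJ S I x.2 ≠ 0 ∧ y = (sJ S I x.1, muMove S I x.2))

/-- The smallest equivalence relation `∼` containing all the moves. -/
def pairEquiv (S : Setup) :
    ((V S → ℤ) × (V S → ℂ)) → ((V S → ℤ) × (V S → ℂ)) → Prop :=
  Relation.EqvGen (stepRel S)

/-- The vector `z^{(i₀)}` for `i₀ ∈ I_irr ∖ {0}`. -/
def zvec (S : Setup) (i' : Fin (S.p+1)) : V S → ℂ
  | .inl ⟨i, _⟩ => if i.1 = i' then 1 else if i.1 = 0 then -1 else 0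
  | .inr _ => 0

/-- Pairing with a coordinate vector. -/
def hp (S : Setup) (γ : V S → ℤ) (a : V S) : ℤ := bform S γ (eps S a)

theorem hp_eq (S : Setup) (γ : V S → ℤ) (a : V S) :
    hp S γ a = 2 * γ a - ∑ b : V S, ((arr S a b : ℤ) + arr S b a) * γ b := by
  unfold hp bform eform eps
  simp only [mul_ite, mul_one, mul_zero, ite_mul, one_mul, zero_mul]
  simp only [Finset.sum_ite_eq', Finset.mem_univ, if_true]
  have : ∀ x : V S, (∑ b : V S, if x = a then (arr S x b : ℤ) * γ b else 0)
      = if x = a then ∑ b : V S, (arr S x b : ℤ) * γ b else 0 := by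
    intro x; split_ifs <;> simp
  simp only [this, Finset.sum_ite_eq', Finset.mem_univ, if_true, add_mul, Finset.sum_add_distrib]
  ring

theorem dcnt_self (S : Setup) (i) (j : Fin (S.m i)) : dcnt S i j j = 0 := by
  simp [dcnt]

theorem dcnt_comm (S : Setup) (i) (j j' : Fin (S.m i)) : dcnt S i j j' = dcnt S i j' j := by
  unfold dcnt
  rw [← Polynomial.natDegree_neg, neg_sub]

theorem natDegree_ge (S : Setup) (i) (j j' : Fin (S.m i)) (h : j ≠ j') :
    2 ≤ (S.q i j - S.q i j').natDegree := by
  by_contra hlt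
  push Not at hlt
  apply sub_ne_zero.2 (S.hqdist i j j' h)
  ext k
  by_cases hk : k < 2
  · interval_cases k
    · simp [S.hq0]
    · simp [S.hq1]
  · rw [Polynomial.coeff_eq_zero_of_natDegree_lt (by omega)]; simp

theorem dcnt_ultra (S : Setup) (i) (j k l : Fin (S.m i)) (hjl : dcnt S i j l = 0)
    (hjk : 0 < dcnt S i j k) : 0 < dcnt S i k l := by
  by_contra h0
  have h0 : dcnt S i k l = 0 := by omega
  unfold dcnt at *
  have : S.q i j - S.q i k = (S.q i j - S.q i l) - (S.q i k - S.q i l) := by ring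
  have h3 := Polynomial.natDegree_sub_le (S.q i j - S.q i l) (S.q i k - S.q i l)
  rw [← this] at h3
  omega

theorem arr_bb (S : Setup) (i i' : {i // Iirr S i}) (j : Fin (S.m i.1)) (j' : Fin (S.m i'.1)) :
    arr S (vI S i j) (vI S i' j') = (if i.1 = 0 ∧ i'.1 ≠ 0 then 1 else 0) +
      (if h : i = i' then
        (if (j : ℕ) < (j' : ℕ) then dcnt S i.1 j (Fin.cast (by rw [h]) j') else 0)
       else 0) := rfl

theorem arr_same (S : Setup) (i : {i // Iirr S i}) (j j' : Fin (S.m i.1)) :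
    arr S (vI S i j) (vI S i j') + arr S (vI S i j') (vI S i j) = dcnt S i.1 j j' := by
  have h1 : ∀ j' : Fin (S.m i.1), Fin.cast (rfl) j' = j' := fun _ => rfl
  simp only [arr_bb, dif_pos, h1]
  have : ¬ (i.1 = 0 ∧ i.1 ≠ 0) := fun h => h.2 h.1
  simp only [this, if_false]
  rcases lt_trichotomy j j' with h | h | h
  · have := Fin.lt_def.1 h
    simp [h, not_lt.2 h.le]
  · subst h; simp [dcnt_self]
  · simp [h, not_lt.2 h.le]; rw [dcnt_comm]

theorem arr_self (S : Setup) (a : V S) : arr S a a = 0 := by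
  rcases a with ⟨i, j⟩ | ⟨i, j, k⟩ <;> simp [arr]

theorem arr_diff (S : Setup) (i i' : {i // Iirr S i}) (h : i ≠ i')
    (j : Fin (S.m i.1)) (j' : Fin (S.m i'.1)) :
    arr S (vI S i j) (vI S i' j') + arr S (vI S i' j') (vI S i j) =
      if i.1 = 0 ∨ i'.1 = 0 then 1 else 0 := by
  have h2 : i.1 ≠ i'.1 := fun hh => h (Subtype.ext hh)
  simp only [arr_bb, dif_neg h, dif_neg h.symm]
  by_cases ha : i.1 = 0 <;> by_cases hb : i'.1 = 0 <;> simp [ha, hb]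
  exact h2 (ha.trans hb.symm)

/-- The total dimension at `0`. -/
def N0 (S : Setup) (γ : V S → ℤ) : ℤ := ∑ j : Fin (S.m 0), γ (v0 S j)

/-- The entries of the legs, extended by zero. -/
def tl (S : Setup) (γ : V S → ℤ) (i : Fin (S.p+1)) (j : Fin (S.m i)) (k : ℕ) : ℤ :=
  if h : k < S.e i j - 1 then γ (Sum.inr ⟨i, j, ⟨k, h⟩⟩) else 0

/-- The value above a leg. -/
def top (S : Setup) (γ : V S → ℤ) (i : Fin (S.p+1)) (j : Fin (S.m i)) : ℤ :=
  if h : Iirr S i then γ (vI S ⟨i, h⟩ j) else N0 S γ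

/-- The entries of the legs, including the top. -/
def tt (S : Setup) (γ : V S → ℤ) (i : Fin (S.p+1)) (j : Fin (S.m i)) : ℕ → ℤ
  | 0 => top S γ i j
  | k+1 => tl S γ i j k

/-- The weight of a branch. -/
def W (S : Setup) (γ : V S → ℤ) (i : Fin (S.p+1)) : ℤ :=
  if i = 0 then 0 else
  if h : Iirr S i then ∑ j : Fin (S.m i), γ (vI S ⟨i, h⟩ j) else tl S γ i ⟨0, S.hm i⟩ 0

theorem sum_V (S : Setup) (f : V S → ℤ) : ∑ a, f a =
    (∑ i : {i // Iirr S i}, ∑ j : Fin (S.m i.1), f (vI S i j)) +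
    ∑ i : Fin (S.p+1), ∑ j : Fin (S.m i), ∑ k : Fin (S.e i j - 1), f (Sum.inr ⟨i, j, k⟩) := by
  rw [Fintype.sum_sum_type]
  congr 1
  · rw [Fintype.sum_sigma]; rfl
  · rw [Fintype.sum_sigma]
    refine Finset.sum_congr rfl fun i _ => ?_
    rw [Fintype.sum_sigma]

theorem tl_sum (S : Setup) (γ : V S → ℤ) (i : Fin (S.p+1)) (j : Fin (S.m i)) (n : ℕ) :
    ∑ k : Fin (S.e i j - 1), (if (k : ℕ) = n then 1 else 0) * γ (Sum.inr ⟨i, j, k⟩)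
      = tl S γ i j n := by
  unfold tl
  split_ifs with h
  · rw [Finset.sum_eq_single ⟨n, h⟩]
    · simp
    · intro b _ hb
      rw [if_neg]; simp
      intro h; apply hb; ext; exact h
    · simp
  · apply Finset.sum_eq_zero
    intro k _
    rw [if_neg]; simp
    have := k.2; omega

theorem reg_j (S : Setup) (i : Fin (S.p+1)) (h : ¬ Iirr S i) (j : Fin (S.m i)) :
    j = ⟨0, S.hm i⟩ := by
  have : ¬ 1 < S.m i := fun hh => h (Or.inl hh)
  ext; simp; have := j.2; omega

theorem i0_of (S : Setup) (i : {i // Iirr S i}) (h : i.1 = 0) : i = i0 S := Subtype.ext h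

theorem ne_i0 (S : Setup) (i : {i // Iirr S i}) (h : i ≠ i0 S) : i.1 ≠ 0 :=
  fun hh => h (i0_of S i hh)

/-- The contribution of the legs to the pairing at `[i,j]`. -/
theorem leg_contrib (S : Setup) (γ : V S → ℤ) (i : {i // Iirr S i}) (j : Fin (S.m i.1)) :
    ∑ i' : Fin (S.p+1), ∑ j' : Fin (S.m i'), ∑ k : Fin (S.e i' j' - 1),
      ((arr S (vI S i j) (Sum.inr ⟨i', j', k⟩) : ℤ) + arr S (Sum.inr ⟨i', j', k⟩) (vI S i j))
        * γ (Sum.inr ⟨i', j', k⟩)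
    = tl S γ i.1 j 0 + if i.1 = 0 then ∑ i' : Fin (S.p+1),
        (if Iirr S i' then 0 else tl S γ i' ⟨0, S.hm i'⟩ 0) else 0 := by
  have e1 : ∀ (i' : Fin (S.p+1)) (j' : Fin (S.m i')) (k : Fin (S.e i' j' - 1)),
      ((arr S (vI S i j) (Sum.inr ⟨i', j', k⟩) : ℤ) + arr S (Sum.inr ⟨i', j', k⟩) (vI S i j))
      = (if i' = i.1 ∧ (j' : ℕ) = j then 1 else 0) * (if (k : ℕ) = 0 then 1 else 0) +
        (if ¬ Iirr S i' ∧ i.1 = 0 ∧ (j' : ℕ) = 0 then 1 else 0) *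
          (if (k : ℕ) = 0 then 1 else 0) := by
    intro i' j' k
    simp only [arr, vI]
    push_cast
    by_cases h1 : i' = i.1 <;> by_cases h2 : (j' : ℕ) = j <;> by_cases h3 : (k : ℕ) = 0 <;>
      by_cases h4 : Iirr S i' <;> by_cases h5 : i.1 = 0 <;> by_cases h6 : (j' : ℕ) = 0 <;>
      simp [h1, h2, h3, h4, h5, h6]
  simp only [e1, add_mul, mul_assoc, Finset.sum_add_distrib, ← Finset.mul_sum, tl_sum]
  congr 1
  · rw [Finset.sum_eq_single i.1]
    · rw [Finset.sum_eq_single j]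
      · simp
      · intro b _ hb
        rw [if_neg]; simp
        rintro ⟨_, h⟩; exact hb (Fin.ext h)
      · simp
    · intro b _ hb
      simp [hb]
    · simp
  · split_ifs with h0
    · refine Finset.sum_congr rfl fun i' _ => ?_
      by_cases hi : Iirr S i'
      · simp [hi]
      · rw [Finset.sum_eq_single ⟨0, S.hm i'⟩]
        · simp [hi, h0]
        · intro b _ hb
          exact absurd (reg_j S i' hi b) hb
        · simp
    · simp [h0]

theorem vb_sum (S : Setup) (γ : V S → ℤ) (i : {i // Iirr S i}) (j : Fin (S.m i.1))  :
    ∑ i' : {i // Iirr S i}, ∑ j' : Fin (S.m i'.1),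
      ((arr S (vI S i j) (vI S i' j') : ℤ) + arr S (vI S i' j') (vI S i j)) * γ (vI S i' j')
    = (∑ j' : Fin (S.m i.1), (dcnt S i.1 j j' : ℤ) * γ (vI S i j')) +
      ∑ i' ∈ Finset.univ.erase i, (if i.1 = 0 ∨ i'.1 = 0 then 1 else 0) *
        ∑ j' : Fin (S.m i'.1), γ (vI S i' j') := by
  rw [← Finset.add_sum_erase _ _ (Finset.mem_univ i)]
  congr 1
  · refine Finset.sum_congr rfl fun j' _ => ?_
    rw [← arr_same]; push_cast; rfl
  · refine Finset.sum_congr rfl fun i' hi' => ?_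
    rw [Finset.mul_sum]
    refine Finset.sum_congr rfl fun j' _ => ?_
    have := arr_diff S i i' (Finset.ne_of_mem_erase hi').symm j j'
    rw [← Nat.cast_add, this]; push_cast; rfl

theorem hp_vI (S : Setup) (γ : V S → ℤ) (i : {i // Iirr S i}) (hi : i.1 ≠ 0)
    (j : Fin (S.m i.1)) :
    hp S γ (vI S i j) = 2 * γ (vI S i j) - N0 S γ
      - (∑ j' : Fin (S.m i.1), (dcnt S i.1 j j' : ℤ) * γ (vI S i j')) - tl S γ i.1 j 0 := by
  rw [hp_eq, sum_V, vb_sum, leg_contrib, if_neg hi]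
  have : ∑ i' ∈ Finset.univ.erase i, (if i.1 = 0 ∨ i'.1 = 0 then (1:ℤ) else 0) *
        ∑ j' : Fin (S.m i'.1), γ (vI S i' j') = N0 S γ := by
    rw [Finset.sum_eq_single (i0 S)]
    · simp [i0]; rfl
    · intro b _ hb
      simp [hi, ne_i0 S b hb]
    · intro h
      simp at h
      exact absurd (by rw [← h]; rfl) hi
  rw [this]; ring

theorem W_sum (S : Setup) (γ : V S → ℤ) : ∑ i, W S γ i =
    (∑ i' ∈ Finset.univ.erase (i0 S), ∑ j' : Fin (S.m i'.1), γ (vI S i' j')) +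
    ∑ i' : Fin (S.p+1), (if Iirr S i' then 0 else tl S γ i' ⟨0, S.hm i'⟩ 0) := by
  have e1 : ∀ i, W S γ i = (if h : Iirr S i then (if i = 0 then 0 else
      ∑ j : Fin (S.m i), γ (vI S ⟨i, h⟩ j)) else 0) +
      (if Iirr S i then 0 else tl S γ i ⟨0, S.hm i⟩ 0) := by
    intro i
    unfold W
    by_cases h : Iirr S i
    · simp [h]
    · have : i ≠ 0 := fun hh => h (Or.inr hh)
      simp [h, this]
  simp only [e1, Finset.sum_add_distrib]
  congr 1
  rw [← Finset.sum_filter_add_sum_filter_not Finset.univ (Iirr S)]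
  rw [Finset.sum_eq_zero (s := Finset.univ.filter fun x => ¬ Iirr S x)
    (by intro x hx; simp at hx; simp [hx])]
  rw [add_zero, ← Finset.sum_subtype_eq_sum_filter]
  rw [← Finset.add_sum_erase _ _ (by simp : i0 S ∈ Finset.subtype (Iirr S) Finset.univ)]
  refine (congrArg₂ (· + ·) ?_ ?_).trans (zero_add _)
  · have : (i0 S).1 = 0 := rfl
    split_ifs with h1
    · rfl
    · rfl
  · refine Finset.sum_congr (by ext; simp) fun x hx => ?_
    have : x.1 ≠ 0 := ne_i0 S x (Finset.ne_of_mem_erase hx)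
    simp [this, x.2]

theorem hp_vIz (S : Setup) (γ : V S → ℤ) (j : Fin (S.m (i0 S).1)) :
    hp S γ (vI S (i0 S) j) = 2 * γ (vI S (i0 S) j) - (∑ i, W S γ i)
      - (∑ j' : Fin (S.m (i0 S).1), (dcnt S (i0 S).1 j j' : ℤ) * γ (vI S (i0 S) j'))
      - tl S γ (i0 S).1 j 0 := by
  rw [hp_eq, sum_V, vb_sum, leg_contrib, W_sum]
  have h0 : (i0 S).1 = 0 := rfl
  simp only [h0, true_or, if_true, one_mul]
  ring

theorem hp_v0 (S : Setup) (γ : V S → ℤ) (j : Fin (S.m 0)) :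
    hp S γ (v0 S j) = 2 * γ (v0 S j) - (∑ i, W S γ i)
      - (∑ j' : Fin (S.m 0), (dcnt S 0 j j' : ℤ) * γ (v0 S j')) - tl S γ 0 j 0 :=
  hp_vIz S γ j

theorem sum_fin_val (n : ℕ) (f : Fin n → ℤ) (k : Fin n) :
    ∑ x : Fin n, (if (x : ℕ) = k then 1 else 0) * f x = f k := by
  rw [Finset.sum_eq_single k]
  · simp
  · intro b _ hb
    rw [if_neg (fun h => hb (Fin.ext h)), zero_mul]
  · simp

theorem top_contrib (S : Setup) (γ : V S → ℤ) (i : Fin (S.p+1)) (j : Fin (S.m i)) (c : ℤ) :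
    ∑ i' : {i // Iirr S i}, ∑ j' : Fin (S.m i'.1),
      (((if i = i'.1 ∧ (j : ℕ) = j' then 1 else 0) +
        (if ¬ Iirr S i ∧ i'.1 = 0 ∧ (j : ℕ) = 0 then 1 else 0)) * c) * γ (vI S i' j')
      = c * top S γ i j := by
  unfold top
  by_cases h : Iirr S i
  · rw [dif_pos h]
    rw [Finset.sum_eq_single ⟨i, h⟩]
    · rw [Finset.sum_eq_single j]
      · simp [h]
      · intro b _ hb
        have : ¬ (j : ℕ) = b := fun hh => hb (Fin.ext hh.symm)
        simp [h, this]
      · simp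
    · intro b _ hb
      have : ¬ i = b.1 := fun hh => hb (Subtype.ext hh.symm)
      simp [h, this]
    · simp
  · rw [dif_neg h]
    rw [Finset.sum_eq_single (i0 S)]
    · unfold N0
      rw [Finset.mul_sum]
      have hne : i ≠ (i0 S).1 := fun hh => h (hh ▸ (i0 S).2)
      have h0 : (i0 S).1 = 0 := rfl
      have hj : (j : ℕ) = 0 := by rw [reg_j S i h j]
      refine Finset.sum_congr rfl fun j' _ => ?_
      have hne' : ¬ (i = (i0 S).1 ∧ (j : ℕ) = j') := fun hh => hne hh.1
      rw [if_neg hne', if_pos ⟨h, h0, hj⟩, zero_add, one_mul]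
      rfl
    · intro b _ hb
      have : ¬ i = b.1 := fun hh => h (hh ▸ b.2)
      have := ne_i0 S b hb
      simp [*]
    · simp

theorem tail_contrib (S : Setup) (γ : V S → ℤ) (i : Fin (S.p+1)) (j : Fin (S.m i)) (c : ℤ)
    (n : ℕ) :
    ∑ i' : Fin (S.p+1), ∑ j' : Fin (S.m i'), ∑ k : Fin (S.e i' j' - 1),
      ((if i = i' ∧ (j : ℕ) = j' then 1 else 0) * (c * if (k : ℕ) = n then 1 else 0)) *
        γ (Sum.inr ⟨i', j', k⟩)
      = c * tl S γ i j n := by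
  simp only [mul_assoc, ← Finset.mul_sum, tl_sum]
  rw [Finset.sum_eq_single i]
  · rw [Finset.sum_eq_single j]
    · simp
    · intro b _ hb
      have : ¬ (j : ℕ) = b := fun hh => hb (Fin.ext hh.symm)
      simp [this]
    · simp
  · intro b _ hb
    simp [Ne.symm hb]
  · simp

theorem hp_inr (S : Setup) (γ : V S → ℤ) (i : Fin (S.p+1)) (j : Fin (S.m i))
    (k : Fin (S.e i j - 1)) :
    hp S γ (Sum.inr ⟨i, j, k⟩) = 2 * tt S γ i j (k+1) - tt S γ i j k - tt S γ i j (k+2) := by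
  rw [hp_eq, sum_V]
  have e1 : ∀ (i' : {i // Iirr S i}) (j' : Fin (S.m i'.1)),
      ((arr S (Sum.inr ⟨i, j, k⟩) (vI S i' j') : ℤ) + arr S (vI S i' j') (Sum.inr ⟨i, j, k⟩))
      = ((if i = i'.1 ∧ (j : ℕ) = j' then 1 else 0) +
        (if ¬ Iirr S i ∧ i'.1 = 0 ∧ (j : ℕ) = 0 then 1 else 0)) *
          (if (k : ℕ) = 0 then 1 else 0) := by
    intro i' j'
    simp only [arr, vI]
    push_cast
    by_cases h1 : i = i'.1 <;> by_cases h2 : (j : ℕ) = j' <;> by_cases h3 : (k : ℕ) = 0 <;>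
      by_cases h4 : Iirr S i <;> by_cases h5 : i'.1 = 0 <;> by_cases h6 : (j : ℕ) = 0 <;>
      simp [h1, h2, h3, h4, h5, h6]
  have e2 : ∀ (i' : Fin (S.p+1)) (j' : Fin (S.m i')) (k' : Fin (S.e i' j' - 1)),
      ((arr S (Sum.inr ⟨i, j, k⟩) (Sum.inr ⟨i', j', k'⟩) : ℤ) +
        arr S (Sum.inr ⟨i', j', k'⟩) (Sum.inr ⟨i, j, k⟩))
      = (if i = i' ∧ (j : ℕ) = j' then 1 else 0) *
          ((if (k : ℕ) = 0 then 0 else 1) * if (k' : ℕ) = (k : ℕ) - 1 then 1 else 0) +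
        (if i = i' ∧ (j : ℕ) = j' then 1 else 0) *
          (1 * if (k' : ℕ) = (k : ℕ) + 1 then 1 else 0) := by
    intro i' j' k'
    simp only [arr]
    by_cases h1 : i = i'
    · have h1' := h1.symm
      by_cases h2 : (j : ℕ) = j'
      · have h2' := h2.symm
        simp only [h1, h2, true_and, and_self, if_true, one_mul]
        push_cast
        congr 1
        by_cases h3 : (k : ℕ) = 0
        · simp [h3]
        · have : (k : ℕ) = k' + 1 ↔ (k' : ℕ) = k - 1 := by omega
          simp [h3, this]
      · have : ¬ (j' : ℕ) = j := fun h => h2 h.symm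
        simp [h2, this]
    · have : ¬ i' = i := fun h => h1 h.symm
      simp [h1, this]
  simp only [e1]
  rw [top_contrib]
  simp only [e2, add_mul, Finset.sum_add_distrib]
  simp only [tail_contrib]
  have hk : γ (Sum.inr ⟨i, j, k⟩) = tt S γ i j (k+1) := by
    simp [tt, tl]
  rw [hk]
  rcases k with ⟨k, hk⟩
  rcases k with _ | k
  · simp [tt]; ring
  · simp [tt]; ring

/-- Reachability by reflections. -/
def Reach (S : Setup) (β γ : V S → ℤ) : Prop := ∃ l : List (V S), β = reflList S l γ

theorem Reach.rfl' (S : Setup) (β : V S → ℤ) : Reach S β β := ⟨[], rfl⟩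

theorem Reach.trans' {S : Setup} {β γ δ : V S → ℤ} (h1 : Reach S β γ) (h2 : Reach S γ δ) :
    Reach S β δ := by
  obtain ⟨l1, rfl⟩ := h1
  obtain ⟨l2, rfl⟩ := h2
  exact ⟨l1 ++ l2, by simp [reflList, List.foldr_append]⟩

/-- The reflection written as an update. -/
def rf (S : Setup) (γ : V S → ℤ) (a : V S) : V S → ℤ :=
  fun b => γ b - if b = a then hp S γ a else 0

theorem refl1_eq (S : Setup) (γ : V S → ℤ) (a : V S) : refl1 S a γ = rf S γ a := by
  funext b
  have : eps S a b = if b = a then 1 else 0 := rfl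
  unfold refl1 rf hp
  rw [this]
  split_ifs <;> simp

theorem hp_rf_self (S : Setup) (γ : V S → ℤ) (a : V S) : hp S (rf S γ a) a = - hp S γ a := by
  rw [hp_eq S (rf S γ a)]
  have : ∑ b : V S, ((arr S a b : ℤ) + arr S b a) * rf S γ a b
      = ∑ b : V S, ((arr S a b : ℤ) + arr S b a) * γ b := by
    refine Finset.sum_congr rfl fun b _ => ?_
    unfold rf
    by_cases h : b = a
    · subst h; simp [arr_self]
    · simp [h]
  rw [this]
  have h2 := hp_eq S γ a
  simp only [rf, if_true]
  linarith

theorem reach_rf (S : Setup) (γ : V S → ℤ) (a : V S) : Reach S γ (rf S γ a) := by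
  refine ⟨[a], ?_⟩
  simp only [reflList, List.foldr]
  rw [refl1_eq]
  funext b
  have := hp_rf_self S γ a
  unfold rf at *
  by_cases h : b = a
  · simp [h] at *; rw [this]; ring
  · simp [h]

theorem reach_zero (S : Setup) (β : V S → ℤ) (h : Reach S β 0) : β = 0 := by
  obtain ⟨l, rfl⟩ := h
  induction l with
  | nil => rfl
  | cons a l ih =>
    have : reflList S (a :: l) 0 = refl1 S a (reflList S l 0) := rfl
    rw [this, ih, refl1_eq]
    funext b
    have : hp S 0 a = 0 := by rw [hp_eq]; simp
    simp [rf, this]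

/-- The branch of a vertex. -/
def br (S : Setup) : V S → Fin (S.p+1)
  | .inl ⟨i, _⟩ => i.1
  | .inr ⟨i, _⟩ => i

theorem br_vI (S : Setup) (i j) : br S (vI S i j) = i.1 := rfl
theorem br_v0 (S : Setup) (j) : br S (v0 S j) = 0 := rfl
theorem br_inr (S : Setup) (i j k) : br S (Sum.inr ⟨i, j, k⟩) = i := rfl

theorem vI_inj (S : Setup) (i) (j j' : Fin (S.m i.1)) (h : vI S i j = vI S i j') : j = j' := by
  unfold vI at h
  simpa using h

theorem inr_inj (S : Setup) (i j) (k k' : Fin (S.e i j - 1))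
    (h : (Sum.inr ⟨i, j, k⟩ : V S) = Sum.inr ⟨i, j, k'⟩) : k = k' := by
  simpa using h

theorem inr_inj2 (S : Setup) (i j j') (k : Fin (S.e i j - 1)) (k' : Fin (S.e i j' - 1))
    (h : (Sum.inr ⟨i, j, k⟩ : V S) = Sum.inr ⟨i, j', k'⟩) : j = j' := by
  simp at h; exact h.1

theorem tl_nonneg (S : Setup) (γ : V S → ℤ) (h : ∀ a, 0 ≤ γ a) (i j k) : 0 ≤ tl S γ i j k := by
  unfold tl; split_ifs
  · exact h _
  · exact le_rfl

theorem N0_nonneg (S : Setup) (γ : V S → ℤ) (h : ∀ a, 0 ≤ γ a) : 0 ≤ N0 S γ :=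
  Finset.sum_nonneg fun _ _ => h _

theorem top_nonneg (S : Setup) (γ : V S → ℤ) (h : ∀ a, 0 ≤ γ a) (i j) : 0 ≤ top S γ i j := by
  unfold top; split_ifs
  · exact h _
  · exact N0_nonneg S γ h

theorem tt_nonneg (S : Setup) (γ : V S → ℤ) (h : ∀ a, 0 ≤ γ a) (i j k) : 0 ≤ tt S γ i j k := by
  cases k
  · exact top_nonneg S γ h i j
  · exact tl_nonneg S γ h i j _

theorem W_nonneg (S : Setup) (γ : V S → ℤ) (h : ∀ a, 0 ≤ γ a) (i) : 0 ≤ W S γ i := by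
  unfold W; split_ifs
  · exact le_rfl
  · exact Finset.sum_nonneg fun _ _ => h _
  · exact tl_nonneg S γ h _ _ _

theorem tl_congr (S : Setup) (γ γ' : V S → ℤ) (i j)
    (h : ∀ k, γ' (Sum.inr ⟨i, j, k⟩) = γ (Sum.inr ⟨i, j, k⟩)) (n : ℕ) :
    tl S γ' i j n = tl S γ i j n := by
  unfold tl; split_ifs
  · exact h _
  · rfl

theorem N0_congr (S : Setup) (γ γ' : V S → ℤ) (h : ∀ j, γ' (v0 S j) = γ (v0 S j)) :
    N0 S γ' = N0 S γ := Finset.sum_congr rfl fun j _ => h j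

theorem tt_congr (S : Setup) (γ γ' : V S → ℤ) (i : Fin (S.p+1)) (j)
    (h : ∀ a, br S a = i → γ' a = γ a) (hN : N0 S γ' = N0 S γ) (n : ℕ) :
    tt S γ' i j n = tt S γ i j n := by
  cases n with
  | zero =>
    simp only [tt, top]; split_ifs with h1
    · exact h _ rfl
    · exact hN
  | succ n => exact tl_congr S γ γ' i j (fun k => h _ rfl) n

theorem W_congr (S : Setup) (γ γ' : V S → ℤ) (i : Fin (S.p+1))
    (h : ∀ a, br S a = i → γ' a = γ a) : W S γ' i = W S γ i := by
  unfold W; split_ifs with h0 h1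
  · rfl
  · exact Finset.sum_congr rfl fun j _ => h _ rfl
  · exact tl_congr S γ γ' i _ (fun k => h _ rfl) 0

theorem hp_congr (S : Setup) (γ γ' : V S → ℤ) (i : Fin (S.p+1)) (hi : i ≠ 0)
    (h : ∀ a, br S a = i → γ' a = γ a) (hN : N0 S γ' = N0 S γ) (a : V S) (ha : br S a = i) :
    hp S γ' a = hp S γ a := by
  rcases a with ⟨i', j⟩ | ⟨i', j, k⟩
  · change i'.1 = i at ha
    have e1 := hp_vI S γ i' (ha ▸ hi) j
    have e2 := hp_vI S γ' i' (ha ▸ hi) j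
    have : (Sum.inl ⟨i', j⟩ : V S) = vI S i' j := rfl
    rw [this, e1, e2, hN, h (vI S i' j) ha,
      tl_congr S γ γ' i'.1 j (fun k => h (Sum.inr ⟨i'.1, j, k⟩) ha)]
    rw [Finset.sum_congr rfl fun j' _ => by rw [h (vI S i' j') ha]]
  · change i' = i at ha
    subst ha
    rw [hp_inr, hp_inr]
    simp only [tt_congr S γ γ' i' j h hN]

theorem tt_E (S : Setup) (γ : V S → ℤ) (i j) (n : ℕ) (hn : S.e i j - 1 < n) :
    tt S γ i j n = 0 := by
  cases n with
  | zero => omega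
  | succ n => simp only [tt, tl]; rw [dif_neg (by omega)]

theorem tt_mono (S : Setup) (γ : V S → ℤ) (h0 : ∀ a, 0 ≤ γ a) (i j)
    (h : ∀ k, hp S γ (Sum.inr ⟨i, j, k⟩) ≤ 0) (n : ℕ) : tt S γ i j (n+1) ≤ tt S γ i j n := by
  by_cases hn : S.e i j - 1 ≤ n
  · rw [tt_E S γ i j (n+1) (by omega)]
    exact tt_nonneg S γ h0 i j n
  · have ih := tt_mono S γ h0 i j h (n+1)
    have := h ⟨n, by omega⟩
    rw [hp_inr] at this
    simp only at this
    have e : n + 1 + 1 = n + 2 := rfl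
    rw [e] at ih
    linarith
termination_by S.e i j - 1 - n

theorem tt_rf_inr (S : Setup) (γ : V S → ℤ) (i j) (k : Fin (S.e i j - 1)) (n : ℕ) :
    tt S (rf S γ (Sum.inr ⟨i, j, k⟩)) i j n =
      tt S γ i j n - if n = k + 1 then hp S γ (Sum.inr ⟨i, j, k⟩) else 0 := by
  cases n with
  | zero =>
    simp only [tt, top]
    have : ∀ i' j', rf S γ (Sum.inr ⟨i, j, k⟩) (vI S i' j') = γ (vI S i' j') := by
      intro i' j'; simp [rf, vI]
    have h2 : N0 S (rf S γ (Sum.inr ⟨i, j, k⟩)) = N0 S γ :=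
      N0_congr S _ _ fun j' => this (i0 S) j'
    simp [this, h2]
  | succ n =>
    simp only [tt, tl]
    split_ifs with h1 h2 h3
    · have : n = k := by omega
      subst this
      simp [rf]
    · have : (⟨n, h1⟩ : Fin (S.e i j - 1)) ≠ k := by
        intro h; apply h2; rw [← h]
      simp [rf, this]
    · exact absurd k.2 (by omega)
    · simp

theorem sortTail (S : Setup) (i j) : ∀ n k : ℕ, k + n = S.e i j - 1 → ∀ γ : V S → ℤ,
    (∀ a, 0 ≤ γ a) →
    (∀ κ : Fin (S.e i j - 1), (κ : ℕ) ≠ k → hp S γ (Sum.inr ⟨i, j, κ⟩) ≤ 0) →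
    (∀ κ κ' : Fin (S.e i j - 1), (κ' : ℕ) = k → (κ : ℕ) + 1 = k →
      hp S γ (Sum.inr ⟨i, j, κ⟩) + hp S γ (Sum.inr ⟨i, j, κ'⟩) ≤ 0) →
    tt S γ i j (k+1) ≤ tt S γ i j k →
    ∃ γ', Reach S γ γ' ∧ (∀ a, 0 ≤ γ' a) ∧
      (∀ a, (∀ κ : Fin (S.e i j - 1), k ≤ κ → a ≠ Sum.inr ⟨i, j, κ⟩) → γ' a = γ a) ∧
      (∀ κ, hp S γ' (Sum.inr ⟨i, j, κ⟩) ≤ 0) ∧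
      (∀ κ : Fin (S.e i j - 1), (κ : ℕ) = k → γ' (Sum.inr ⟨i, j, κ⟩) =
        γ (Sum.inr ⟨i, j, κ⟩) - max 0 (hp S γ (Sum.inr ⟨i, j, κ⟩))) := by
  intro n
  induction n with
  | zero =>
    intro k hk γ h0 h1 _ _
    refine ⟨γ, Reach.rfl' S γ, h0, fun _ _ => rfl, fun κ => h1 κ (by have := κ.2; omega), ?_⟩
    intro κ hκ
    have := κ.2; omega
  | succ n ih =>
    intro k hk γ h0 h1 h2 h3
    let κ0 : Fin (S.e i j - 1) := ⟨k, by omega⟩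
    have hκ0 : ∀ κ : Fin (S.e i j - 1), (κ : ℕ) = k → κ = κ0 := fun κ h => Fin.ext h
    by_cases hpos : hp S γ (Sum.inr ⟨i, j, κ0⟩) ≤ 0
    · refine ⟨γ, Reach.rfl' S γ, h0, fun _ _ => rfl, fun κ => ?_, ?_⟩
      · by_cases hk : (κ : ℕ) = k
        · rw [hκ0 κ hk]; exact hpos
        · exact h1 κ hk
      · intro κ hk
        rw [hκ0 κ hk, max_eq_left hpos, sub_zero]
    · push Not at hpos
      set c := hp S γ (Sum.inr ⟨i, j, κ0⟩) with hc
      set γ1 := rf S γ (Sum.inr ⟨i, j, κ0⟩) with hγ1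
      have T1 : ∀ n, tt S γ1 i j n = tt S γ i j n - if n = k + 1 then c else 0 :=
        fun n => tt_rf_inr S γ i j κ0 n
      have hc' : c = 2 * tt S γ i j (k+1) - tt S γ i j k - tt S γ i j (k+2) := by
        rw [hc, hp_inr]
      have hval : γ (Sum.inr ⟨i, j, κ0⟩) = tt S γ i j (k+1) := by
        simp only [tt, tl]; rw [dif_pos κ0.2]
      have hn0 := tt_nonneg S γ h0 i j
      have h01 : ∀ a, 0 ≤ γ1 a := by
        intro a
        simp only [hγ1, rf]
        split_ifs with ha
        · rw [ha, hval, ← hc, hc']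
          have := hn0 (k+2)
          linarith
        · simpa using h0 a
      have g0 : (∀ κ : Fin (S.e i j - 1), (κ : ℕ) ≠ k+1 → hp S γ1 (Sum.inr ⟨i, j, κ⟩) ≤ 0) := by
        intro κ hκ
        have e := hp_inr S γ i j κ
        rw [hp_inr, T1, T1, T1]
        by_cases e1 : (κ : ℕ) = k
        · rw [if_pos (by omega), if_neg (by omega), if_neg (by omega), e1]
          linarith
        · by_cases e2 : (κ : ℕ) + 1 = k
          · rw [if_neg (by omega), if_neg (by omega), if_pos (by omega)]
            have := h2 κ κ0 rfl e2
            linarith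
          · rw [if_neg (by omega), if_neg (by omega), if_neg (by omega)]
            have := h1 κ e1
            linarith
      have g1 : (∀ κ κ' : Fin (S.e i j - 1), (κ' : ℕ) = k+1 → (κ : ℕ) + 1 = k+1 →
      hp S γ1 (Sum.inr ⟨i, j, κ⟩) + hp S γ1 (Sum.inr ⟨i, j, κ'⟩) ≤ 0) := by
        intro κ κ' hκ' hκ
        have hk : (κ : ℕ) = k := by omega
        have := h1 κ' (by omega)
        rw [hp_inr] at this
        rw [hp_inr, hp_inr, T1, T1, T1, T1, T1, T1, hκ', hk]
        rw [hκ'] at this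
        rw [if_pos rfl, if_neg (by omega), if_neg (by omega), if_neg (by omega)]
        have e : tt S γ i j (k + 1 + 1) = tt S γ i j (k + 2) := rfl
        rw [e] at *
        linarith
      have g2 : tt S γ1 i j (k+1+1) ≤ tt S γ1 i j (k+1) := by
        rw [T1, T1, if_neg (by omega), if_pos rfl]
        have e : k + 1 + 1 = k + 2 := rfl
        rw [e]
        linarith
      obtain ⟨γ', r1, r2, r3, r4, r5⟩ := ih (k+1) (by omega) γ1 h01 g0 g1 g2
      refine ⟨γ', (reach_rf S γ _).trans' r1, r2, ?_, r4, ?_⟩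
      · intro a ha
        rw [r3 a (fun κ hκ => ha κ (by omega))]
        have := ha κ0 le_rfl
        simp [hγ1, rf, this]
      · intro κ hκ
        rw [hκ0 κ hκ, r3, ← hc, max_eq_right hpos.le]
        · simp [hγ1, rf, hc]
        · intro κ hκ1 h
          have := inr_inj S i j _ _ h
          rw [← this] at hκ1
          have : (κ0 : ℕ) = k := rfl
          omega

/-- The (formal) pairing at the first vertex of a leg. -/
def hpt (S : Setup) (γ : V S → ℤ) (i : Fin (S.p+1)) (j : Fin (S.m i)) : ℤ :=
  2 * tl S γ i j 0 - top S γ i j - tl S γ i j 1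

theorem hpt_eq (S : Setup) (γ : V S → ℤ) (i j) (k : Fin (S.e i j - 1)) (hk : (k : ℕ) = 0) :
    hp S γ (Sum.inr ⟨i, j, k⟩) = hpt S γ i j := by
  rw [hp_inr, hk]; rfl

theorem hpt_nonpos (S : Setup) (γ : V S → ℤ) (h0 : ∀ a, 0 ≤ γ a) (i j)
    (h : ∀ k : Fin (S.e i j - 1), (k : ℕ) = 0 → hp S γ (Sum.inr ⟨i, j, k⟩) ≤ 0) :
    hpt S γ i j ≤ 0 := by
  by_cases hE : 0 < S.e i j - 1
  · rw [← hpt_eq S γ i j ⟨0, hE⟩ rfl]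
    exact h _ rfl
  · have := top_nonneg S γ h0 i j
    unfold hpt tl
    rw [dif_neg hE, dif_neg (by omega)]
    linarith

theorem sortTail0 (S : Setup) (i j) (γ : V S → ℤ) (h0 : ∀ a, 0 ≤ γ a)
    (h1 : ∀ κ : Fin (S.e i j - 1), (κ : ℕ) ≠ 0 → hp S γ (Sum.inr ⟨i, j, κ⟩) ≤ 0)
    (h2 : tl S γ i j 0 ≤ top S γ i j) :
    ∃ γ', Reach S γ γ' ∧ (∀ a, 0 ≤ γ' a) ∧
      (∀ a, (∀ κ : Fin (S.e i j - 1), a ≠ Sum.inr ⟨i, j, κ⟩) → γ' a = γ a) ∧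
      (∀ κ, hp S γ' (Sum.inr ⟨i, j, κ⟩) ≤ 0) ∧
      tl S γ' i j 0 = tl S γ i j 0 - max 0 (hpt S γ i j) := by
  obtain ⟨γ', r1, r2, r3, r4, r5⟩ := sortTail S i j (S.e i j - 1) 0 (by omega) γ h0 h1
    (by intros; omega) h2
  refine ⟨γ', r1, r2, fun a ha => r3 a fun κ _ => ha κ, r4, ?_⟩
  by_cases hE : 0 < S.e i j - 1
  · rw [← hpt_eq S γ i j ⟨0, hE⟩ rfl]
    have := r5 ⟨0, hE⟩ rfl
    simp only [tl, dif_pos hE]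
    exact this
  · have := hpt_nonpos S γ h0 i j (fun k => absurd k.2 (by omega))
    rw [max_eq_left this]
    simp [tl, hE]

/-- The vertices adjacent to branch zero (or in it). -/
def FN (S : Setup) : V S → Prop
  | .inl _ => True
  | .inr ⟨i, _, κ⟩ => ¬ Iirr S i ∧ (κ : ℕ) = 0

theorem W_irr (S : Setup) (γ : V S → ℤ) (i : {i // Iirr S i}) (hi : i.1 ≠ 0) :
    W S γ i.1 = ∑ j : Fin (S.m i.1), γ (vI S i j) := by
  unfold W
  rw [if_neg hi, dif_pos i.2]

theorem W_reg (S : Setup) (γ : V S → ℤ) (i : Fin (S.p+1)) (hi : ¬ Iirr S i) :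
    W S γ i = tl S γ i ⟨0, S.hm i⟩ 0 := by
  unfold W
  rw [if_neg (fun h => hi (Or.inr h)), dif_neg hi]

theorem top_irr (S : Setup) (γ : V S → ℤ) (i : {i // Iirr S i}) (j : Fin (S.m i.1)) :
    top S γ i.1 j = γ (vI S i j) := by
  unfold top
  rw [dif_pos i.2]

theorem top_reg (S : Setup) (γ : V S → ℤ) (i : Fin (S.p+1)) (hi : ¬ Iirr S i)
    (j : Fin (S.m i)) : top S γ i j = N0 S γ := by
  unfold top
  rw [dif_neg hi]

theorem D_nonneg (S : Setup) (γ : V S → ℤ) (h0 : ∀ a, 0 ≤ γ a) (i : {i // Iirr S i})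
    (j : Fin (S.m i.1)) :
    0 ≤ ∑ j' : Fin (S.m i.1), (dcnt S i.1 j j' : ℤ) * γ (vI S i j') :=
  Finset.sum_nonneg fun _ _ => mul_nonneg (Int.natCast_nonneg _) (h0 _)

theorem FN_bound (S : Setup) (γ : V S → ℤ) (h0 : ∀ a, 0 ≤ γ a) (a : V S) (ha : FN S a)
    (i : Fin (S.p+1)) (hb : br S a = i) (hi : i ≠ 0) :
    hp S γ a ≤ 2 * W S γ i - N0 S γ := by
  subst hb
  rcases a with ⟨i, j⟩ | ⟨i, j, k⟩
  · change i.1 ≠ 0 at hi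
    change hp S γ (vI S i j) ≤ 2 * W S γ i.1 - N0 S γ
    rw [hp_vI S γ i hi, W_irr S γ i hi]
    have h1 := D_nonneg S γ h0 i j
    have h2 := tl_nonneg S γ h0 i.1 j 0
    have h3 : γ (vI S i j) ≤ ∑ j : Fin (S.m i.1), γ (vI S i j) :=
      Finset.single_le_sum (f := fun j => γ (vI S i j)) (fun _ _ => h0 _) (Finset.mem_univ j)
    linarith
  · change ¬ Iirr S i ∧ (k : ℕ) = 0 at ha
    change hp S γ (Sum.inr ⟨i, j, k⟩) ≤ 2 * W S γ i - N0 S γ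
    rw [hpt_eq S γ i j k ha.2, W_reg S γ i ha.1]
    unfold hpt
    rw [top_reg S γ i ha.1, ← reg_j S i ha.1 j]
    have h2 := tl_nonneg S γ h0 i j 1
    linarith

theorem hp_shift (S : Setup) (γ γ' : V S → ℤ) (i : Fin (S.p+1)) (hi : i ≠ 0)
    (h : ∀ a, br S a = i → γ' a = γ a) (a : V S) (ha : br S a = i) (hF : FN S a) :
    hp S γ' a = hp S γ a + (N0 S γ - N0 S γ') := by
  subst ha
  rcases a with ⟨i', j⟩ | ⟨i', j, k⟩
  · change i'.1 ≠ 0 at hi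
    have e1 := hp_vI S γ i' hi j
    have e2 := hp_vI S γ' i' hi j
    have : (Sum.inl ⟨i', j⟩ : V S) = vI S i' j := rfl
    rw [this, e1, e2, h (vI S i' j) rfl,
      tl_congr S γ γ' i'.1 j (fun k => h (Sum.inr ⟨i'.1, j, k⟩) rfl)]
    rw [Finset.sum_congr rfl fun j' _ => by rw [h (vI S i' j') rfl]]
    ring
  · change ¬ Iirr S i' ∧ (k : ℕ) = 0 at hF
    rw [hpt_eq S γ i' j k hF.2, hpt_eq S γ' i' j k hF.2]
    unfold hpt
    rw [top_reg S γ i' hF.1, top_reg S γ' i' hF.1,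
      tl_congr S γ γ' i' j (fun k => h (Sum.inr ⟨i', j, k⟩) rfl),
      tl_congr S γ γ' i' j (fun k => h (Sum.inr ⟨i', j, k⟩) rfl)]
    ring

theorem hp_nshift (S : Setup) (γ γ' : V S → ℤ) (i : Fin (S.p+1))
    (h : ∀ a, br S a = i → γ' a = γ a) (a : V S) (ha : br S a = i) (hF : ¬ FN S a) :
    hp S γ' a = hp S γ a := by
  subst ha
  rcases a with ⟨i', j⟩ | ⟨i', j, k⟩
  · exact absurd trivial hF
  · change ¬ (¬ Iirr S i' ∧ (k : ℕ) = 0) at hF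
    have e : ∀ n, tl S γ' i' j n = tl S γ i' j n :=
      tl_congr S γ γ' i' j (fun k => h (Sum.inr ⟨i', j, k⟩) rfl)
    rw [hp_inr, hp_inr]
    rcases hk : (k : ℕ) with _ | n
    · have hI : Iirr S i' := by
        by_contra hI
        exact hF ⟨hI, hk⟩
      have e2 : top S γ' i' j = top S γ i' j := by
        rw [top_irr S γ ⟨i', hI⟩ j, top_irr S γ' ⟨i', hI⟩ j]
        exact h _ rfl
      simp only [tt, e, e2]
    · simp only [tt, e]

/-- The outcome of the branch operation. -/
def BrOK (S : Setup) (γ γ' : V S → ℤ) (i : Fin (S.p+1)) : Prop :=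
  Reach S γ γ' ∧ (∀ a, 0 ≤ γ' a) ∧ (∀ a, br S a ≠ i → γ' a = γ a) ∧
  (∀ a, br S a = i → hp S γ' a ≤ 0) ∧
  (γ' = γ ∨ ∃ a, br S a = i ∧ FN S a ∧ 0 < hp S γ a ∧ W S γ' i = W S γ i - hp S γ a)

theorem hp_leg_congr (S : Setup) (γ γ' : V S → ℤ) (i : Fin (S.p+1)) (j : Fin (S.m i))
    (h : ∀ k, γ' (Sum.inr ⟨i, j, k⟩) = γ (Sum.inr ⟨i, j, k⟩)) (k : Fin (S.e i j - 1))
    (ht : (k : ℕ) = 0 → top S γ' i j = top S γ i j) :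
    hp S γ' (Sum.inr ⟨i, j, k⟩) = hp S γ (Sum.inr ⟨i, j, k⟩) := by
  have e : ∀ n, tl S γ' i j n = tl S γ i j n := tl_congr S γ γ' i j h
  rw [hp_inr, hp_inr]
  rcases hk : (k : ℕ) with _ | n
  · simp only [tt, e, ht hk]
  · simp only [tt, e]

theorem branch_irr (S : Setup) (γ : V S → ℤ) (h0 : ∀ a, 0 ≤ γ a) (i : {i // Iirr S i})
    (hi : i.1 ≠ 0) (hW : W S γ i.1 ≤ N0 S γ)
    (hl : ∀ j κ, hp S γ (Sum.inr ⟨i.1, j, κ⟩) ≤ 0) : ∃ γ', BrOK S γ γ' i.1 := by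
  by_cases hall : ∀ j, hp S γ (vI S i j) ≤ 0
  · refine ⟨γ, Reach.rfl' S γ, h0, fun _ _ => rfl, ?_, Or.inl rfl⟩
    rintro (⟨i', j⟩ | ⟨i', j, k⟩) ha
    · change i'.1 = i.1 at ha
      have := Subtype.ext ha
      subst this
      exact hall j
    · change i' = i.1 at ha
      subst ha
      exact hl j k
  push Not at hall
  obtain ⟨j, hj⟩ := hall
  set C := hp S γ (vI S i j) with hC
  have hCe := hp_vI S γ i hi j
  rw [← hC] at hCe
  have hD := D_nonneg S γ h0 i j
  set D := ∑ j' : Fin (S.m i.1), (dcnt S i.1 j j' : ℤ) * γ (vI S i j') with hDdef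
  rw [W_irr S γ i hi] at hW
  have hg : γ (vI S i j) ≤ ∑ j : Fin (S.m i.1), γ (vI S i j) :=
    Finset.single_le_sum (f := fun j => γ (vI S i j)) (fun _ _ => h0 _) (Finset.mem_univ j)
  have ht0 := tl_nonneg S γ h0 i.1 j 0
  set γ1 := rf S γ (vI S i j) with hγ1
  have g1I : ∀ j', γ1 (vI S i j') = γ (vI S i j') - if j' = j then C else 0 := by
    intro j'
    simp only [hγ1, rf, ← hC]
    by_cases hjj : j' = j
    · subst hjj; simp
    · rw [if_neg hjj, if_neg (fun hh => hjj (vI_inj S i _ _ hh))]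
  have g1o : ∀ a, a ≠ vI S i j → γ1 a = γ a := by
    intro a ha
    simp [hγ1, rf, ha]
  have g1l : ∀ i' j' k, γ1 (Sum.inr ⟨i', j', k⟩) = γ (Sum.inr ⟨i', j', k⟩) :=
    fun i' j' k => g1o _ (by simp [vI])
  have h01 : ∀ a, 0 ≤ γ1 a := by
    intro a
    by_cases ha : a = vI S i j
    · rw [ha, g1I, if_pos rfl]; linarith
    · rw [g1o a ha]; exact h0 a
  have htop1 : top S γ1 i.1 j = γ (vI S i j) - C := by
    rw [top_irr, g1I, if_pos rfl]
  have htl1 : ∀ j' n, tl S γ1 i.1 j' n = tl S γ i.1 j' n :=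
    fun j' => tl_congr S γ γ1 i.1 j' (fun k => g1l _ _ k)
  have hpt0 := hpt_nonpos S γ h0 i.1 j (fun k _ => hl j k)
  have hpt1 : hpt S γ1 i.1 j = hpt S γ i.1 j + C := by
    unfold hpt
    rw [htl1, htl1, htop1, top_irr]; ring
  obtain ⟨γ', r1, r2, r3, r4, r5⟩ := sortTail0 S i.1 j γ1 h01
    (by
      intro κ hκ
      rw [hp_leg_congr S γ γ1 i.1 j (g1l _ _) κ (fun h => absurd h hκ)]
      exact hl j κ)
    (by rw [htl1, htop1]; linarith)
  rw [hpt1, htl1] at r5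
  have g2I : ∀ j', γ' (vI S i j') = γ (vI S i j') - if j' = j then C else 0 := by
    intro j'
    rw [r3 _ (by intro κ; simp [vI]), g1I]
  have hN : N0 S γ' = N0 S γ := by
    refine N0_congr S γ γ' fun j' => ?_
    rw [r3 _ (by intro κ; simp [v0]), g1o]
    intro h
    have := congrArg (br S) h
    rw [br_v0, br_vI] at this
    exact hi this.symm
  have htl2 : ∀ j', j' ≠ j → ∀ k, γ' (Sum.inr ⟨i.1, j', k⟩) = γ (Sum.inr ⟨i.1, j', k⟩) := by
    intro j' hj' k
    rw [r3 _ (fun κ h => hj' (inr_inj2 S i.1 j' j k κ h)), g1l]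
  have hs : ∀ j', ∑ j'' : Fin (S.m i.1), (dcnt S i.1 j' j'' : ℤ) * γ' (vI S i j'')
      = (∑ j'' : Fin (S.m i.1), (dcnt S i.1 j' j'' : ℤ) * γ (vI S i j''))
        - dcnt S i.1 j' j * C := by
    intro j'
    simp only [g2I, mul_sub, Finset.sum_sub_distrib]
    simp
  refine ⟨γ', (reach_rf S γ _).trans' r1, r2, ?_, ?_, Or.inr ⟨vI S i j, rfl, trivial, hj, ?_⟩⟩
  · intro a ha
    rw [r3, g1o]
    · intro h; rw [h] at ha; exact ha rfl
    · intro κ h; rw [h] at ha; exact ha rfl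
  · rintro (⟨i', j'⟩ | ⟨i', j', k⟩) ha
    · change i'.1 = i.1 at ha
      have := Subtype.ext ha
      subst this
      change hp S γ' (vI S i' j') ≤ 0
      rw [hp_vI S γ' i' hi j', hs, hN, g2I]
      by_cases hjj : j' = j
      · subst hjj
        rw [if_pos rfl, dcnt_self, r5, ← hDdef]
        have : max 0 (hpt S γ i'.1 j' + C) ≤ C := max_le hj.le (by linarith)
        push_cast
        linarith
      · rw [if_neg hjj, tl_congr S γ γ' i'.1 j' (htl2 j' hjj)]
        have e1 : (dcnt S i'.1 j' j : ℤ) * γ (vI S i' j) ≤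
            ∑ j'' : Fin (S.m i'.1), (dcnt S i'.1 j' j'' : ℤ) * γ (vI S i' j'') :=
          Finset.single_le_sum (f := fun j'' => (dcnt S i'.1 j' j'' : ℤ) * γ (vI S i' j''))
            (fun _ _ => mul_nonneg (Int.natCast_nonneg _) (h0 _)) (Finset.mem_univ j)
        have e2 : γ (vI S i' j') + γ (vI S i' j) ≤ ∑ j : Fin (S.m i'.1), γ (vI S i' j) := by
          rw [← Finset.sum_pair (f := fun j => γ (vI S i' j)) hjj]
          exact Finset.sum_le_sum_of_subset_of_nonneg (Finset.subset_univ _) (fun _ _ _ => h0 _)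
        have e3 := tl_nonneg S γ h0 i'.1 j' 0
        have e4 : (dcnt S i'.1 j' j : ℤ) * (C - γ (vI S i' j)) ≤ 0 :=
          mul_nonpos_of_nonneg_of_nonpos (Int.natCast_nonneg _) (by linarith)
        linarith
    · change i' = i.1 at ha
      subst ha
      by_cases hjj : j' = j
      · subst hjj; exact r4 k
      · rw [hp_leg_congr S γ γ' i.1 j' (htl2 j' hjj) k]
        · exact hl j' k
        · intro _
          rw [top_irr, top_irr, g2I, if_neg hjj, sub_zero]
  · rw [W_irr S γ' i hi, W_irr S γ i hi]
    simp only [g2I, Finset.sum_sub_distrib]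
    simp [hC]

theorem branch_reg (S : Setup) (γ : V S → ℤ) (h0 : ∀ a, 0 ≤ γ a) (i : Fin (S.p+1))
    (hi : ¬ Iirr S i) (hW : W S γ i ≤ N0 S γ)
    (hl : ∀ j (κ : Fin (S.e i j - 1)), (κ : ℕ) ≠ 0 → hp S γ (Sum.inr ⟨i, j, κ⟩) ≤ 0) :
    ∃ γ', BrOK S γ γ' i := by
  have hcases : ∀ δ : V S → ℤ, (∀ κ, hp S δ (Sum.inr ⟨i, ⟨0, S.hm i⟩, κ⟩) ≤ 0) →
      ∀ a, br S a = i → hp S δ a ≤ 0 := by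
    rintro δ hδ (⟨i', j'⟩ | ⟨i', j', k⟩) ha
    · exact absurd i'.2 (by rw [show i'.1 = i from ha]; exact hi)
    · change i' = i at ha
      subst ha
      have := reg_j S i' hi j'
      subst this
      exact hδ k
  by_cases hpt0 : hpt S γ i ⟨0, S.hm i⟩ ≤ 0
  · refine ⟨γ, Reach.rfl' S γ, h0, fun _ _ => rfl, hcases γ fun κ => ?_, Or.inl rfl⟩
    by_cases hκ : (κ : ℕ) = 0
    · rw [hpt_eq S γ i _ κ hκ]; exact hpt0
    · exact hl _ κ hκ
  · push Not at hpt0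
    obtain ⟨γ', r1, r2, r3, r4, r5⟩ := sortTail0 S i ⟨0, S.hm i⟩ γ h0 (hl _)
      (by rw [top_reg S γ i hi, ← W_reg S γ i hi]; exact hW)
    have hE : 0 < S.e i ⟨0, S.hm i⟩ - 1 := by
      by_contra hE
      have := hpt_nonpos S γ h0 i ⟨0, S.hm i⟩ (fun k => absurd k.2 (by omega))
      linarith
    refine ⟨γ', r1, r2, ?_, hcases γ' r4, Or.inr ⟨Sum.inr ⟨i, ⟨0, S.hm i⟩, ⟨0, hE⟩⟩, rfl,
      ⟨hi, rfl⟩, ?_, ?_⟩⟩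
    · intro a ha
      apply r3
      intro κ h; rw [h] at ha; exact ha rfl
    · rw [hpt_eq S γ i _ _ rfl]; exact hpt0
    · rw [hpt_eq S γ i _ _ rfl, W_reg S γ i hi, W_reg S γ' i hi, r5, max_eq_right hpt0.le]

theorem branch (S : Setup) (γ : V S → ℤ) (h0 : ∀ a, 0 ≤ γ a) (i : Fin (S.p+1))
    (hi : i ≠ 0) (hW : W S γ i ≤ N0 S γ)
    (hl : ∀ a, br S a = i → ¬ FN S a → hp S γ a ≤ 0) :
    ∃ γ', BrOK S γ γ' i := by
  by_cases hI : Iirr S i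
  · exact branch_irr S γ h0 ⟨i, hI⟩ hi hW fun j κ => hl _ rfl (fun h => h.1 hI)
  · exact branch_reg S γ h0 i hI hW fun j κ hκ => hl _ rfl (fun h => hκ h.2)

/-- Adjacency inside the support. -/
def Ad (S : Setup) (γ : V S → ℤ) (x y : V S) : Prop :=
  (0 < arr S x y + arr S y x) ∧ x ∈ supp S γ ∧ y ∈ supp S γ

/-- Connectedness inside the support. -/
def Cn (S : Setup) (γ : V S → ℤ) : V S → V S → Prop := Relation.ReflTransGen (Ad S γ)

theorem Ad.symm' {S : Setup} {γ : V S → ℤ} {x y : V S} (h : Ad S γ x y) : Ad S γ y x :=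
  ⟨by rw [add_comm]; exact h.1, h.2.2, h.2.1⟩

theorem Cn.symm' {S : Setup} {γ : V S → ℤ} {x y : V S} (h : Cn S γ x y) : Cn S γ y x := by
  induction h with
  | refl => exact Relation.ReflTransGen.refl
  | tail _ h2 ih => exact Relation.ReflTransGen.head h2.symm' ih

theorem Cn.trans' {S : Setup} {γ : V S → ℤ} {x y z : V S} (h : Cn S γ x y) (h2 : Cn S γ y z) :
    Cn S γ x z := Relation.ReflTransGen.trans h h2

theorem Ad.cn {S : Setup} {γ : V S → ℤ} {x y : V S} (h : Ad S γ x y) : Cn S γ x y :=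
  Relation.ReflTransGen.single h

theorem exists_v0 (S : Setup) (γ : V S → ℤ) (h : 0 < N0 S γ) : ∃ j, 0 < γ (v0 S j) := by
  by_contra hc
  push Not at hc
  have : N0 S γ ≤ 0 := Finset.sum_nonpos fun j _ => hc j
  linarith

theorem tt_anti (S : Setup) (γ : V S → ℤ) (h0 : ∀ a, 0 ≤ γ a) (i j)
    (h : ∀ k, hp S γ (Sum.inr ⟨i, j, k⟩) ≤ 0) (n : ℕ) : tt S γ i j n ≤ tt S γ i j 0 := by
  induction n with
  | zero => exact le_rfl
  | succ n ih => exact (tt_mono S γ h0 i j h n).trans ih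

theorem leg_tt (S : Setup) (γ : V S → ℤ) (i j) (k : Fin (S.e i j - 1)) :
    γ (Sum.inr ⟨i, j, k⟩) = tt S γ i j (k+1) := by
  simp only [tt, tl]
  rw [dif_pos k.2]

theorem leg_up (S : Setup) (γ : V S → ℤ) (h0 : ∀ a, 0 ≤ γ a) (i j)
    (h : ∀ k, hp S γ (Sum.inr ⟨i, j, k⟩) ≤ 0) : ∀ (n : ℕ) (k : Fin (S.e i j - 1)), (k : ℕ) = n →
    0 < γ (Sum.inr ⟨i, j, k⟩) →
    ∃ i' j', 0 < γ (vI S i' j') ∧ Cn S γ (Sum.inr ⟨i, j, k⟩) (vI S i' j') := by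
  intro n
  induction n with
  | zero =>
    intro k hk hpos
    have ht : 0 < top S γ i j := by
      have := tt_anti S γ h0 i j h (k+1)
      rw [← leg_tt] at this
      exact lt_of_lt_of_le hpos this
    by_cases hI : Iirr S i
    · rw [top_irr S γ ⟨i, hI⟩ j] at ht
      refine ⟨⟨i, hI⟩, j, ht, Ad.cn ⟨?_, hpos.ne', ht.ne'⟩⟩
      simp only [vI, arr]
      simp [hk]
    · rw [top_reg S γ i hI] at ht
      obtain ⟨j', hj'⟩ := exists_v0 S γ ht
      refine ⟨i0 S, j', hj', Ad.cn ⟨?_, hpos.ne', hj'.ne'⟩⟩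
      have := reg_j S i hI j
      subst this
      simp only [vI, arr]
      simp [hk, hI, i0]
  | succ n ih =>
    intro k hk hpos
    have hk' : n < S.e i j - 1 := by have := k.2; omega
    have hpos' : 0 < γ (Sum.inr ⟨i, j, ⟨n, hk'⟩⟩) := by
      have := tt_mono S γ h0 i j h (n+1)
      rw [leg_tt S γ i j] at hpos ⊢
      rw [hk] at hpos
      exact lt_of_lt_of_le hpos this
    obtain ⟨i', j', h1, h2⟩ := ih ⟨n, hk'⟩ rfl hpos'
    refine ⟨i', j', h1, Cn.trans' (Ad.cn ⟨?_, hpos.ne', hpos'.ne'⟩) h2⟩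
    simp [arr, hk]

theorem same_branch (S : Setup) (γ : V S → ℤ) (h0 : ∀ a, 0 ≤ γ a) (i : {i // Iirr S i})
    (hl : ∀ j k, hp S γ (Sum.inr ⟨i.1, j, k⟩) ≤ 0)
    (h : ∀ j, 2 * γ (vI S i j) ≤ (∑ j' : Fin (S.m i.1), (dcnt S i.1 j j' : ℤ) * γ (vI S i j'))
      + tl S γ i.1 j 0) (j l : Fin (S.m i.1)) (hj : 0 < γ (vI S i j)) (hll : 0 < γ (vI S i l)) :
    Cn S γ (vI S i j) (vI S i l) := by
  have adj : ∀ j l, 0 < γ (vI S i j) → 0 < γ (vI S i l) → 0 < dcnt S i.1 j l →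
      Ad S γ (vI S i j) (vI S i l) := by
    intro j l h1 h2 h3
    exact ⟨by rw [arr_same]; exact h3, h1.ne', h2.ne'⟩
  by_cases hd : 0 < dcnt S i.1 j l
  · exact (adj j l hj hll hd).cn
  · have hd0 : dcnt S i.1 j l = 0 := by omega
    have ht : tl S γ i.1 j 0 ≤ γ (vI S i j) := by
      have := tt_anti S γ h0 i.1 j (hl j) 1
      simp only [tt] at this
      rwa [top_irr] at this
    have hs : 0 < ∑ j' : Fin (S.m i.1), (dcnt S i.1 j j' : ℤ) * γ (vI S i j') := by
      have := h j
      linarith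
    obtain ⟨k, hk⟩ : ∃ k, 0 < (dcnt S i.1 j k : ℤ) * γ (vI S i k) := by
      by_contra hc
      push Not at hc
      have := Finset.sum_nonpos (s := Finset.univ) fun k _ => hc k
      linarith
    have hk1 : 0 < dcnt S i.1 j k := by
      rcases Nat.eq_zero_or_pos (dcnt S i.1 j k) with hz | hz
      · rw [hz] at hk; simp at hk
      · exact hz
    have hk2 : 0 < γ (vI S i k) := by
      rcases (h0 (vI S i k)).eq_or_lt with hz | hz
      · rw [← hz] at hk; simp at hk
      · exact hz
    exact (adj j k hj hk2 hk1).cn.trans'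
      (adj k l hk2 hll (dcnt_ultra S i.1 j k l hd0 hk1)).cn

theorem fund_lem (S : Setup) (γ : V S → ℤ) (h0 : ∀ a, 0 ≤ γ a) (hne : γ ≠ 0)
    (hh : ∀ a, hp S γ a ≤ 0)
    (hc : 0 < N0 S γ ∨ ∃ r : {i // Iirr S i}, r.1 ≠ 0 ∧
      ∀ i : {i // Iirr S i}, i.1 ≠ 0 → i ≠ r → ∀ j, γ (vI S i j) = 0) : fund S γ := by
  refine ⟨hne, h0, ?_, hh⟩
  have P1 : ∀ a, 0 < γ a → ∃ i' j', 0 < γ (vI S i' j') ∧ Cn S γ a (vI S i' j') := by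
    rintro (⟨i, j⟩ | ⟨i, j, k⟩) ha
    · exact ⟨i, j, ha, Relation.ReflTransGen.refl⟩
    · exact leg_up S γ h0 i j (fun k => hh _) k k rfl ha
  have ad0 : ∀ (i : {i // Iirr S i}) j j', i.1 ≠ 0 → 0 < γ (vI S i j) → 0 < γ (v0 S j') →
      Ad S γ (vI S i j) (v0 S j') := by
    intro i j j' hi h1 h2
    refine ⟨?_, h1.ne', h2.ne'⟩
    have := arr_diff S i (i0 S) (fun h => hi (by rw [h]; rfl)) j j'
    change 0 < arr S (vI S i j) (vI S (i0 S) j') + arr S (vI S (i0 S) j') (vI S i j)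
    rw [this, if_pos (show i.1 = 0 ∨ (i0 S).1 = 0 from Or.inr rfl)]
    exact Nat.one_pos
  have P2 : ∀ i j i' j', 0 < γ (vI S i j) → 0 < γ (vI S i' j') →
      Cn S γ (vI S i j) (vI S i' j') := by
    by_cases hN : 0 < N0 S γ
    · have P0 : ∀ j j', 0 < γ (v0 S j) → 0 < γ (v0 S j') → Cn S γ (v0 S j) (v0 S j') := by
        intro j j' hj hj'
        by_cases hW : ∃ i, 0 < W S γ i
        · obtain ⟨i, hi⟩ := hW
          have hi0 : i ≠ 0 := by
            intro h; rw [h] at hi; simp [W] at hi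
          by_cases hI : Iirr S i
          · rw [W_irr S γ ⟨i, hI⟩ hi0] at hi
            obtain ⟨l, hl⟩ : ∃ l, 0 < γ (vI S ⟨i, hI⟩ l) := by
              by_contra hcc
              push Not at hcc
              have := Finset.sum_nonpos (s := Finset.univ) fun k _ => hcc k
              linarith
            exact (ad0 _ l j hi0 hl hj).symm'.cn.trans' (ad0 _ l j' hi0 hl hj').cn
          · rw [W_reg S γ i hI] at hi
            have hE : 0 < S.e i ⟨0, S.hm i⟩ - 1 := by
              by_contra hE
              simp [tl, hE] at hi
            have hv : 0 < γ (Sum.inr ⟨i, ⟨0, S.hm i⟩, ⟨0, hE⟩⟩) := by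
              simpa [tl, hE] using hi
            have ad : ∀ j, 0 < γ (v0 S j) →
                Ad S γ (Sum.inr ⟨i, ⟨0, S.hm i⟩, ⟨0, hE⟩⟩) (v0 S j) := by
              intro j hj
              refine ⟨?_, hv.ne', hj.ne'⟩
              simp [v0, arr, hI, i0]
            exact (ad j hj).symm'.cn.trans' (ad j' hj').cn
        · have hW0 : ∑ i, W S γ i = 0 := by
            refine Finset.sum_eq_zero fun i _ => ?_
            push Not at hW
            exact le_antisymm (hW i) (W_nonneg S γ h0 i)
          refine same_branch S γ h0 (i0 S) (fun _ _ => hh _) ?_ j j' hj hj'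
          intro l
          have := hp_vIz S γ l
          have h2 := hh (vI S (i0 S) l)
          rw [this, hW0] at h2
          linarith
      obtain ⟨l, hl⟩ := exists_v0 S γ hN
      have P3 : ∀ i j, 0 < γ (vI S i j) → Cn S γ (vI S i j) (v0 S l) := by
        intro i j hj
        by_cases hi : i.1 = 0
        · have := i0_of S i hi
          subst this
          exact P0 j l hj hl
        · exact (ad0 i j l hi hj hl).cn
      intro i j i' j' h1 h2
      exact (P3 i j h1).trans' (P3 i' j' h2).symm'
    · have hN0 : N0 S γ = 0 := le_antisymm (not_lt.1 hN) (N0_nonneg S γ h0)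
      obtain ⟨r, hr, hr2⟩ := hc.resolve_left hN
      have hv0 : ∀ j, γ (v0 S j) = 0 := by
        intro j
        have := (Finset.sum_eq_zero_iff_of_nonneg (fun j _ => h0 (v0 S j))).1 hN0 j
          (Finset.mem_univ j)
        exact this
      have hir : ∀ i j, 0 < γ (vI S i j) → i = r := by
        intro i j hj
        by_contra hne
        by_cases hi : i.1 = 0
        · have := i0_of S i hi
          subst this
          have := hv0 j
          exact hj.ne' this
        · exact hj.ne' (hr2 i hi hne j)
      intro i j i' j' h1 h2
      have e1 := hir i j h1
      have e2 := hir i' j' h2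
      subst e1
      subst e2
      refine same_branch S γ h0 i' (fun _ _ => hh _) ?_ j j' h1 h2
      intro l
      have := hh (vI S i' l)
      rw [hp_vI S γ i' hr, hN0] at this
      linarith
  intro a ha b hb
  have ha' : 0 < γ a := lt_of_le_of_ne (h0 a) (Ne.symm ha)
  have hb' : 0 < γ b := lt_of_le_of_ne (h0 b) (Ne.symm hb)
  obtain ⟨i, j, p1, p2⟩ := P1 a ha'
  obtain ⟨i', j', p1', p2'⟩ := P1 b hb'
  exact (p2.trans' (P2 i j i' j' p1 p1')).trans' p2'.symm'

theorem phase1 (S : Setup) (β : V S → ℤ) (h0 : ∀ a, 0 ≤ β a)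
    (hW : ∀ i, i ≠ 0 → W S β i ≤ N0 S β)
    (hl : ∀ a, br S a ≠ 0 → ¬ FN S a → hp S β a ≤ 0) (s : Finset (Fin (S.p+1))) :
    0 ∉ s → ∃ γ, Reach S β γ ∧ (∀ a, 0 ≤ γ a) ∧ (∀ a, br S a ∉ s → γ a = β a) ∧
      (∀ a, br S a ∈ s → hp S γ a ≤ 0) ∧
      (∀ i ∈ s, (∀ a, br S a = i → γ a = β a) ∨
        ∃ a, br S a = i ∧ FN S a ∧ 0 < hp S β a ∧ W S γ i = W S β i - hp S β a) := by
  induction s using Finset.induction_on with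
  | empty =>
    intro _
    exact ⟨β, Reach.rfl' S β, h0, fun _ _ => rfl, fun a ha => by simp at ha,
      fun i hi => by simp at hi⟩
  | insert i s his ih =>
    intro hs
    have hi0 : i ≠ 0 := by
      intro h; apply hs; rw [h]; exact Finset.mem_insert_self _ _
    have hs0 : 0 ∉ s := fun h => hs (Finset.mem_insert_of_mem h)
    obtain ⟨γ, r1, r2, r3, r4, r5⟩ := ih hs0
    have hN : N0 S γ = N0 S β := N0_congr S β γ fun j => r3 _ hs0
    have hag : ∀ a, br S a = i → γ a = β a := fun a ha => r3 a (by rw [ha]; exact his)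
    have hhp := hp_congr S β γ i hi0 hag hN
    have hWi : W S γ i = W S β i := W_congr S β γ i hag
    obtain ⟨γ', q1, q2, q3, q4, q5⟩ := branch S γ r2 i hi0
      (by rw [hWi, hN]; exact hW i hi0)
      (fun a ha hF => by rw [hhp a ha]; exact hl a (by rw [ha]; exact hi0) hF)
    have hN' : N0 S γ' = N0 S γ := N0_congr S γ γ' fun j => q3 _ (Ne.symm hi0)
    refine ⟨γ', r1.trans' q1, q2, ?_, ?_, ?_⟩
    · intro a ha
      rw [Finset.mem_insert] at ha
      push Not at ha
      rw [q3 a ha.1, r3 a ha.2]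
    · intro a ha
      by_cases hai : br S a = i
      · exact q4 a hai
      · have has : br S a ∈ s := Finset.mem_of_mem_insert_of_ne ha hai
        rw [hp_congr S γ γ' (br S a) (fun h => hs0 (h ▸ has))
          (fun b hb => q3 b (by rw [hb]; exact hai)) hN' a rfl]
        exact r4 a has
    · intro k hk
      by_cases hki : k = i
      · subst hki
        rcases q5 with rfl | ⟨a, a1, a2, a3, a4⟩
        · exact Or.inl hag
        · refine Or.inr ⟨a, a1, a2, ?_, ?_⟩
          · rw [← hhp a a1]; exact a3
          · rw [a4, hWi, hhp a a1]
      · have hks : k ∈ s := Finset.mem_of_mem_insert_of_ne hk hki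
        have hag' : ∀ a, br S a = k → γ' a = γ a := fun b hb => q3 b (by rw [hb]; exact hki)
        rcases r5 k hks with h | ⟨a, a1, a2, a3, a4⟩
        · exact Or.inl fun a ha => by rw [hag' a ha, h a ha]
        · exact Or.inr ⟨a, a1, a2, a3, by rw [W_congr S γ γ' k hag', a4]⟩

theorem vcases (S : Setup) (P : V S → Prop) (h1 : ∀ j, P (v0 S j))
    (h2 : ∀ j k, P (Sum.inr ⟨0, j, k⟩)) (h3 : ∀ a, br S a ≠ 0 → P a) : ∀ a, P a := by
  intro a
  by_cases h : br S a = 0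
  · rcases a with ⟨i, j⟩ | ⟨i, j, k⟩
    · have := i0_of S i h
      subst this
      exact h1 j
    · change i = 0 at h
      subst h
      exact h2 j k
  · exact h3 a h

theorem phase2 (S : Setup) (γ : V S → ℤ) (h0 : ∀ a, 0 ≤ γ a)
    (hb : ∀ a, br S a ≠ 0 → hp S γ a ≤ 0)
    (hl0 : ∀ j k, hp S γ (Sum.inr ⟨0, j, k⟩) ≤ 0)
    (r : {i // Iirr S i}) (hr : r.1 ≠ 0) (hWr : W S γ r.1 = N0 S γ)
    (j : Fin (S.m 0)) (he : 0 < hp S γ (v0 S j))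
    (hre : ∀ j', hp S γ (vI S r j') + hp S γ (v0 S j) ≤ 0) :
    ∃ γ', Reach S γ γ' ∧ (∀ a, 0 ≤ γ' a) ∧ (∀ a, hp S γ' a ≤ 0) ∧
      (0 < N0 S γ' ∨ ∃ r : {i // Iirr S i}, r.1 ≠ 0 ∧
      ∀ i : {i // Iirr S i}, i.1 ≠ 0 → i ≠ r → ∀ j, γ' (vI S i j) = 0) := by
  set e := hp S γ (v0 S j) with hedef
  set R := ∑ i ∈ Finset.univ.erase r.1, W S γ i with hRdef
  have hsumW : ∑ i, W S γ i = N0 S γ + R := by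
    rw [← hWr, hRdef, Finset.add_sum_erase _ _ (Finset.mem_univ _)]
  have hRi : ∀ i, i ≠ r.1 → W S γ i ≤ R := fun i hi =>
    Finset.single_le_sum (f := fun i => W S γ i) (fun i _ => W_nonneg S γ h0 i)
      (Finset.mem_erase.2 ⟨hi, Finset.mem_univ i⟩)
  have hRik : ∀ i k, i ≠ k → i ≠ r.1 → k ≠ r.1 → W S γ i + W S γ k ≤ R := by
    intro i k hik hi hk
    rw [← Finset.sum_pair (f := fun i => W S γ i) hik]
    refine Finset.sum_le_sum_of_subset_of_nonneg ?_ (fun i _ _ => W_nonneg S γ h0 i)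
    intro x hx
    simp only [Finset.mem_insert, Finset.mem_singleton] at hx
    rcases hx with rfl | rfl <;> simp [hi, hk]
  have hR0 : 0 ≤ R := Finset.sum_nonneg fun i _ => W_nonneg S γ h0 i
  have hD0 : ∀ l, 0 ≤ ∑ j' : Fin (S.m 0), (dcnt S 0 l j' : ℤ) * γ (v0 S j') := fun l =>
    Finset.sum_nonneg fun _ _ => mul_nonneg (Int.natCast_nonneg _) (h0 _)
  have hD := hD0 j
  have hee := hp_v0 S γ j
  rw [← hedef, hsumW] at hee
  set D := ∑ j' : Fin (S.m 0), (dcnt S 0 j j' : ℤ) * γ (v0 S j') with hDdef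
  have ht0 := tl_nonneg S γ h0 0 j 0
  have ht1 := tl_nonneg S γ h0 0 j 1
  have hbN : γ (v0 S j) ≤ N0 S γ :=
    Finset.single_le_sum (f := fun j => γ (v0 S j)) (fun _ _ => h0 _) (Finset.mem_univ j)
  -- the first reflection
  set γ1 := rf S γ (v0 S j) with hγ1
  have g1I : ∀ j', γ1 (v0 S j') = γ (v0 S j') - if j' = j then e else 0 := by
    intro j'
    simp only [hγ1, rf, ← hedef]
    by_cases hjj : j' = j
    · subst hjj; simp
    · have hne : v0 S j' ≠ v0 S j := fun hh => hjj (vI_inj S (i0 S) _ _ hh)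
      rw [if_neg hjj, if_neg hne]
  have g1o : ∀ a, a ≠ v0 S j → γ1 a = γ a := by
    intro a ha
    simp [hγ1, rf, ha]
  have g1b : ∀ a, br S a ≠ 0 → γ1 a = γ a := fun a ha => g1o a (fun h => ha (by rw [h]; rfl))
  have g1l : ∀ i' j' k, γ1 (Sum.inr ⟨i', j', k⟩) = γ (Sum.inr ⟨i', j', k⟩) :=
    fun i' j' k => g1o _ (by simp [v0])
  have h01 : ∀ a, 0 ≤ γ1 a := by
    intro a
    by_cases ha : a = v0 S j
    · rw [ha, g1I, if_pos rfl]; linarith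
    · rw [g1o a ha]; exact h0 a
  have hN1 : N0 S γ1 = N0 S γ - e := by
    unfold N0
    simp only [g1I, Finset.sum_sub_distrib]
    simp
  have hW1 : ∀ i, W S γ1 i = W S γ i := by
    intro i
    by_cases hi : i = 0
    · subst hi; simp [W]
    · exact W_congr S γ γ1 i fun a ha => g1b a (by rw [ha]; exact hi)
  have htl1 : ∀ i' j' n, tl S γ1 i' j' n = tl S γ i' j' n :=
    fun i' j' => tl_congr S γ γ1 i' j' (fun k => g1l _ _ k)
  have htop0 : ∀ (δ : V S → ℤ) l, top S δ 0 l = δ (v0 S l) := fun δ l => top_irr S δ (i0 S) l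
  have hhp1j : hp S γ1 (v0 S j) = -e := hp_rf_self S γ (v0 S j)
  have hhp1l : ∀ l, l ≠ j → hp S γ1 (v0 S l) ≤ -R := by
    intro l hlj
    rw [hp_v0 S γ1 l]
    simp only [hW1, htl1, g1I, mul_sub, Finset.sum_sub_distrib]
    rw [hsumW, if_neg hlj]
    have e0 : ∑ x : Fin (S.m 0), (dcnt S 0 l x : ℤ) * (if x = j then e else 0)
        = dcnt S 0 l j * e := by simp
    rw [e0]
    have e1 : (dcnt S 0 l j : ℤ) * γ (v0 S j) ≤
        ∑ j'' : Fin (S.m 0), (dcnt S 0 l j'' : ℤ) * γ (v0 S j'') :=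
      Finset.single_le_sum (f := fun j'' => (dcnt S 0 l j'' : ℤ) * γ (v0 S j''))
        (fun _ _ => mul_nonneg (Int.natCast_nonneg _) (h0 _)) (Finset.mem_univ j)
    have e2 : γ (v0 S l) + γ (v0 S j) ≤ N0 S γ := by
      rw [← Finset.sum_pair (f := fun j => γ (v0 S j)) hlj]
      exact Finset.sum_le_sum_of_subset_of_nonneg (Finset.subset_univ _) (fun _ _ _ => h0 _)
    have e3 := tl_nonneg S γ h0 0 l 0
    have e4 : (dcnt S 0 l j : ℤ) * (e - γ (v0 S j)) ≤ 0 :=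
      mul_nonpos_of_nonneg_of_nonpos (Int.natCast_nonneg _) (by linarith)
    linarith
  have hleg : ∀ l (k : Fin (S.e 0 l - 1)), (l ≠ j ∨ (k : ℕ) ≠ 0) →
      hp S γ1 (Sum.inr ⟨0, l, k⟩) ≤ 0 := by
    intro l k hlk
    rw [hp_leg_congr S γ γ1 0 l (g1l 0 l) k]
    · exact hl0 l k
    · intro hk
      rcases hlk with h | h
      · rw [htop0, htop0, g1I, if_neg h, sub_zero]
      · exact absurd hk h
  have hpt0 := hpt_nonpos S γ h0 0 j (fun k _ => hl0 j k)
  have hpt1 : hpt S γ1 0 j = hpt S γ 0 j + e := by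
    unfold hpt
    rw [htl1, htl1, htop0, htop0, g1I, if_pos rfl]; ring
  have hpt1' : hpt S γ1 0 j ≤ tl S γ 0 j 0 - R := by
    rw [hpt1]; unfold hpt; rw [htop0]; linarith
  have hsh : ∀ a, br S a ≠ 0 → FN S a → hp S γ1 a = hp S γ a + e := by
    intro a ha hF
    rw [hp_shift S γ γ1 (br S a) ha (fun b hb => g1b b (by rw [hb]; exact ha)) a rfl hF, hN1]
    ring
  have hnsh : ∀ a, br S a ≠ 0 → ¬ FN S a → hp S γ1 a ≤ 0 := by
    intro a ha hF
    rw [hp_nshift S γ γ1 (br S a) (fun b hb => g1b b (by rw [hb]; exact ha)) a rfl hF]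
    exact hb a ha
  have hrb : ∀ a, br S a = r.1 → FN S a → hp S γ1 a ≤ 0 := by
    intro a ha hF
    rw [hsh a (by rw [ha]; exact hr) hF]
    rcases a with ⟨i', j'⟩ | ⟨i', j', k⟩
    · have := Subtype.ext (show i'.1 = r.1 from ha)
      subst this
      exact hre j'
    · change i' = r.1 at ha
      exact absurd (ha ▸ r.2) hF.1
  have hreach := reach_rf S γ (v0 S j)
  rw [← hγ1] at hreach
  by_cases hcase : ∃ a, br S a ≠ 0 ∧ FN S a ∧ 0 < hp S γ1 a
  · obtain ⟨a, ha0, haF, hapos⟩ := hcase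
    set i := br S a with hidef
    have hir : i ≠ r.1 := fun h => by
      have := hrb a h haF
      linarith
    have hWi : W S γ i ≤ R := hRi i hir
    have hbound := FN_bound S γ1 h01 a haF i rfl ha0
    rw [hW1, hN1] at hbound
    obtain ⟨γ', q1, q2, q3, q4, q5⟩ := branch S γ1 h01 i ha0 (by rw [hW1, hN1]; linarith)
      (fun b hb hF => hnsh b (by rw [hb]; exact ha0) hF)
    have hN' : N0 S γ' = N0 S γ1 := N0_congr S γ1 γ' fun j => q3 _ (Ne.symm ha0)
    rcases q5 with rfl | ⟨a', b1, b2, b3, b4⟩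
    · have := q4 a rfl
      linarith
    set C := hp S γ1 a' with hC
    have hCe : C ≤ e := by
      rw [hC, hsh a' (by rw [b1]; exact ha0) b2]
      have := hb a' (by rw [b1]; exact ha0)
      linarith
    have hCb := FN_bound S γ1 h01 a' b2 i b1 ha0
    rw [hW1, hN1, ← hC] at hCb
    have hsW' : ∑ k, W S γ' k = (∑ k, W S γ1 k) - C := by
      rw [← Finset.add_sum_erase _ _ (Finset.mem_univ i),
        ← Finset.add_sum_erase _ (fun k => W S γ1 k) (Finset.mem_univ i), b4]
      have : ∑ k ∈ Finset.univ.erase i, W S γ' k = ∑ k ∈ Finset.univ.erase i, W S γ1 k := by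
        refine Finset.sum_congr rfl fun k hk => ?_
        exact W_congr S γ1 γ' k fun b hb => q3 b (by rw [hb]; exact Finset.ne_of_mem_erase hk)
      rw [this]; ring
    have hv0' : ∀ l, hp S γ' (v0 S l) = hp S γ1 (v0 S l) + C := by
      intro l
      rw [hp_v0, hp_v0, hsW', tl_congr S γ1 γ' 0 l (fun k => q3 _ (Ne.symm ha0))]
      simp only [fun l => q3 (v0 S l) (Ne.symm ha0)]
      ring
    refine ⟨γ', hreach.trans' q1, q2, ?_, Or.inl (by rw [hN', hN1]; linarith)⟩
    refine vcases S _ ?_ ?_ ?_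
    · intro l
      rw [hv0']
      by_cases hlj : l = j
      · rw [hlj, hhp1j]; linarith
      · have := hhp1l l hlj
        linarith
    · intro l k
      rw [hp_nshift S γ1 γ' 0 (fun b hb => q3 b (by rw [hb]; exact Ne.symm ha0))
        (Sum.inr ⟨0, l, k⟩) rfl (fun h => h.1 (Or.inr rfl))]
      by_cases hlk : l ≠ j ∨ (k : ℕ) ≠ 0
      · exact hleg l k hlk
      · push Not at hlk
        obtain ⟨rfl, hk⟩ := hlk
        rw [hpt_eq S γ1 0 l k hk]
        linarith
    · intro c hc
      by_cases hci : br S c = i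
      · exact q4 c hci
      · rw [hp_congr S γ1 γ' (br S c) hc (fun b hb => q3 b (by rw [hb]; exact hci)) hN' c rfl]
        by_cases hF : FN S c
        · by_cases hcr : br S c = r.1
          · exact hrb c hcr hF
          · have := FN_bound S γ1 h01 c hF (br S c) rfl hc
            rw [hW1, hN1] at this
            have h2 := hRik i (br S c) (Ne.symm hci) hir hcr
            linarith
        · exact hnsh c hc hF
  · push Not at hcase
    obtain ⟨γ', q1, q2, q3, q4, q5⟩ := sortTail0 S 0 j γ1 h01
      (fun κ hκ => hleg j κ (Or.inr hκ))
      (by rw [htl1, htop0, g1I, if_pos rfl]; linarith)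
    have q3v : ∀ i l, γ' (vI S i l) = γ1 (vI S i l) := fun i l => q3 _ (by intro κ; simp [vI])
    have q3b : ∀ a, br S a ≠ 0 → γ' a = γ1 a := by
      intro a ha
      apply q3
      intro κ h; rw [h] at ha; exact ha rfl
    have q3l : ∀ l, l ≠ j → ∀ k, γ' (Sum.inr ⟨0, l, k⟩) = γ1 (Sum.inr ⟨0, l, k⟩) := by
      intro l hl k
      exact q3 _ (fun κ h => hl (inr_inj2 S 0 l j k κ h))
    have q3v0 : ∀ l, γ' (v0 S l) = γ1 (v0 S l) := q3v (i0 S)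
    have hN' : N0 S γ' = N0 S γ1 := N0_congr S γ1 γ' q3v0
    have hW' : ∀ i, W S γ' i = W S γ1 i := by
      intro i
      by_cases hi : i = 0
      · subst hi; simp [W]
      · exact W_congr S γ1 γ' i fun a ha => q3b a (by rw [ha]; exact hi)
    have hv0' : ∀ l, hp S γ' (v0 S l) = hp S γ1 (v0 S l) + tl S γ1 0 l 0 - tl S γ' 0 l 0 := by
      intro l
      rw [hp_v0, hp_v0]
      simp only [hW', q3v0]
      ring
    refine ⟨γ', hreach.trans' q1, q2, ?_, ?_⟩
    · refine vcases S _ ?_ ?_ ?_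
      · intro l
        rw [hv0']
        by_cases hlj : l = j
        · subst hlj
          rw [q5, hhp1j]
          have : max 0 (hpt S γ1 0 l) ≤ e := max_le he.le (by linarith)
          linarith
        · rw [tl_congr S γ1 γ' 0 l (q3l l hlj)]
          have := hhp1l l hlj
          linarith
      · intro l k
        by_cases hlj : l = j
        · subst hlj; exact q4 k
        · rw [hp_leg_congr S γ1 γ' 0 l (q3l l hlj) k]
          · exact hleg l k (Or.inl hlj)
          · intro _
            rw [htop0, htop0, q3v0]
      · intro c hc
        rw [hp_congr S γ1 γ' (br S c) hc (fun b hb => q3b b (by rw [hb]; exact hc)) hN' c rfl]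
        by_cases hF : FN S c
        · exact hcase c hc hF
        · exact hnsh c hc hF
    · by_cases hNp : 0 < N0 S γ'
      · exact Or.inl hNp
      · refine Or.inr ⟨r, hr, ?_⟩
        intro i hi hir l
        rw [hN', hN1] at hNp
        have h1 := hRi i.1 (fun h => hir (Subtype.ext h))
        rw [W_irr S γ i hi] at h1
        have h2 : γ (vI S i l) ≤ ∑ j : Fin (S.m i.1), γ (vI S i j) :=
          Finset.single_le_sum (f := fun j => γ (vI S i j)) (fun _ _ => h0 _) (Finset.mem_univ l)
        rw [q3v, g1b (vI S i l) hi]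
        have := h0 (vI S i l)
        linarith

theorem bform_hp (S : Setup) (β δ : V S → ℤ) : bform S β δ = ∑ a, δ a * hp S β a := by
  simp only [hp_eq]
  unfold bform eform
  have e1 : ∑ a : V S, ∑ b : V S, (arr S a b : ℤ) * β a * δ b
      = ∑ a : V S, ∑ b : V S, (arr S b a : ℤ) * β b * δ a := Finset.sum_comm
  rw [e1]
  simp only [mul_sub, Finset.mul_sum, add_mul, Finset.sum_sub_distrib, Finset.sum_add_distrib,
    mul_add]
  have e2 : ∑ a : V S, ∑ b : V S, (arr S b a : ℤ) * β b * δ a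
      = ∑ a : V S, ∑ b : V S, δ a * ((arr S b a : ℤ) * β b) :=
    Finset.sum_congr rfl fun a _ => Finset.sum_congr rfl fun b _ => by ring
  have e3 : ∑ a : V S, ∑ b : V S, (arr S a b : ℤ) * δ a * β b
      = ∑ a : V S, ∑ b : V S, δ a * ((arr S a b : ℤ) * β b) :=
    Finset.sum_congr rfl fun a _ => Finset.sum_congr rfl fun b _ => by ring
  have e4 : ∑ a : V S, δ a * (2 * β a) = ∑ a : V S, β a * δ a + ∑ a : V S, δ a * β a := by
    rw [← Finset.sum_add_distrib]
    exact Finset.sum_congr rfl fun a _ => by ring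
  rw [e2, e3, e4]
  ring

theorem bform_epsJ (S : Setup) (β : V S → ℤ) (I : ∀ i : Fin (S.p+1), Fin (S.m i)) :
    bform S β (epsJ S I) = ∑ i : {i // Iirr S i}, hp S β (vI S i (I i.1)) := by
  rw [bform_hp, sum_V]
  have e1 : ∑ i : Fin (S.p+1), ∑ j : Fin (S.m i), ∑ k : Fin (S.e i j - 1),
      epsJ S I (Sum.inr ⟨i, j, k⟩) * hp S β (Sum.inr ⟨i, j, k⟩) = 0 := by
    refine Finset.sum_eq_zero fun i _ => Finset.sum_eq_zero fun j _ =>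
      Finset.sum_eq_zero fun k _ => ?_
    simp [epsJ]
  rw [e1, add_zero]
  refine Finset.sum_congr rfl fun i _ => ?_
  exact sum_fin_val (S.m i.1) (fun j => hp S β (vI S i j)) (I i.1)

theorem main_lem (S : Setup) (β : V S → ℤ) (hβ : quasiFund S β) :
    ∃ γ, Reach S β γ ∧ fund S γ := by
  obtain ⟨hL, h0, hne, hJ, hleg, -⟩ := hβ
  have hleg' : ∀ i j k, hp S β (Sum.inr ⟨i, j, k⟩) ≤ 0 := hleg
  have hLW : ∀ i : {i // Iirr S i}, i.1 ≠ 0 → W S β i.1 = N0 S β := by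
    intro i hi
    rw [W_irr S β i hi]
    exact (hL i hi).symm
  have hN : 0 < N0 S β := by
    rcases (N0_nonneg S β h0).eq_or_lt with hz | hz
    · exfalso
      apply hne
      have hv : ∀ i j, β (vI S i j) = 0 := by
        intro i j
        have hs : ∑ j : Fin (S.m i.1), β (vI S i j) = 0 := by
          by_cases hi : i.1 = 0
          · have := i0_of S i hi
            subst this
            exact hz.symm
          · rw [← W_irr S β i hi, hLW i hi]; exact hz.symm
        exact (Finset.sum_eq_zero_iff_of_nonneg (fun j _ => h0 (vI S i j))).1 hs j
          (Finset.mem_univ j)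
      funext a
      rcases a with ⟨i, j⟩ | ⟨i, j, k⟩
      · exact hv i j
      · have h1 := tt_anti S β h0 i j (hleg' i j) (k+1)
        rw [← leg_tt] at h1
        have h2 : tt S β i j 0 = 0 := by
          simp only [tt, top]
          split_ifs
          · exact hv _ _
          · exact hz.symm
        rw [h2] at h1
        exact le_antisymm h1 (h0 _)
    · exact hz
  have hWN : ∀ i, i ≠ 0 → W S β i ≤ N0 S β := by
    intro i hi
    by_cases hI : Iirr S i
    · exact (hLW ⟨i, hI⟩ hi).le
    · have := tt_anti S β h0 i ⟨0, S.hm i⟩ (hleg' _ _) 1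
      simp only [tt] at this
      rw [W_reg S β i hI]
      rwa [top_reg S β i hI] at this
  obtain ⟨γ, r1, r2, r3, r4, r5⟩ := phase1 S β h0 hWN
    (by
      rintro (⟨i, j⟩ | ⟨i, j, k⟩) _ hF
      · exact absurd trivial hF
      · exact hleg' i j k) (Finset.univ.erase 0) (by simp)
  have r3' : ∀ a, br S a = 0 → γ a = β a := fun a ha => r3 a (by simp [ha])
  have r4' : ∀ a, br S a ≠ 0 → hp S γ a ≤ 0 := fun a ha => r4 a (by simp [ha])
  have hNγ : N0 S γ = N0 S β := N0_congr S β γ fun j => r3' _ rfl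
  have hl0 : ∀ j k, hp S γ (Sum.inr ⟨0, j, k⟩) ≤ 0 := by
    intro j k
    rw [hp_nshift S β γ 0 r3' (Sum.inr ⟨0, j, k⟩) rfl (fun h => h.1 (Or.inr rfl))]
    exact hleg' 0 j k
  have hne' : ∀ γ', Reach S β γ' → γ' ≠ 0 := by
    intro γ' h hz
    rw [hz] at h
    exact hne (reach_zero S β h)
  by_cases hall : ∀ j, hp S γ (v0 S j) ≤ 0
  · exact ⟨γ, r1, fund_lem S γ r2 (hne' γ r1) (vcases S _ hall hl0 r4')
      (Or.inl (by rw [hNγ]; exact hN))⟩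
  push Not at hall
  obtain ⟨j, hj⟩ := hall
  -- moved branches
  have hmv : ∀ i, i ≠ 0 → (∀ a, br S a = i → γ a = β a) ∨
      ∃ (hI : Iirr S i) (x : Fin (S.m i)), hp S β (vI S ⟨i, hI⟩ x) = W S β i - W S γ i := by
    intro i hi
    rcases r5 i (by simp [hi]) with h | ⟨a, a1, a2, a3, a4⟩
    · exact Or.inl h
    · right
      rcases a with ⟨i', l⟩ | ⟨i', l, k⟩
      · change i'.1 = i at a1
        subst a1
        refine ⟨i'.2, l, ?_⟩
        have : hp S β (Sum.inl ⟨i', l⟩) = hp S β (vI S ⟨i'.1, i'.2⟩ l) := rfl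
        rw [a4, ← this]; ring
      · exact absurd (hleg' i' l k) (not_le.2 a3)
  have hδreg : ∀ i, ¬ Iirr S i → W S β i - W S γ i = 0 := by
    intro i hI
    rcases hmv i (fun h => hI (Or.inr h)) with h | ⟨hI', _⟩
    · rw [W_congr S β γ i h, sub_self]
    · exact absurd hI' hI
  have hδ0 : W S β 0 - W S γ 0 = 0 := by simp [W]
  have hsumδ : ∑ i, (W S β i - W S γ i) = ∑ i : {i // Iirr S i}, (W S β i.1 - W S γ i.1) := by
    rw [← Finset.sum_subtype (Finset.univ.filter (Iirr S)) (fun x => by simp)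
      (fun i => W S β i - W S γ i)]
    symm
    refine Finset.sum_subset (Finset.subset_univ _) fun i _ hi => hδreg i ?_
    simpa using hi
  have he : hp S γ (v0 S j) = hp S β (v0 S j) + ∑ i, (W S β i - W S γ i) := by
    rw [hp_v0, hp_v0, tl_congr S β γ 0 j (fun k => r3' _ rfl), Finset.sum_sub_distrib]
    simp only [fun l => r3' (v0 S l) rfl]
    ring
  have key : ∀ I : (∀ i : Fin (S.p+1), Fin (S.m i)), I 0 = j →
      hp S γ (v0 S j) + ∑ i : {i // Iirr S i}, (if i = i0 S then 0 else
        hp S β (vI S i (I i.1)) - (W S β i.1 - W S γ i.1)) ≤ 0 := by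
    intro I hI
    have h1 := hJ I
    rw [bform_epsJ] at h1
    rw [he, hsumδ, add_assoc, ← Finset.sum_add_distrib]
    refine le_trans (le_of_eq ?_) h1
    rw [← Finset.add_sum_erase _ _ (Finset.mem_univ (i0 S)),
      ← Finset.add_sum_erase _ (fun i => hp S β (vI S i (I i.1))) (Finset.mem_univ (i0 S))]
    have e0 : hp S β (vI S (i0 S) (I (i0 S).1)) = hp S β (v0 S j) := by
      change hp S β (v0 S (I 0)) = _
      rw [hI]
    have e1 : W S β (i0 S).1 - W S γ (i0 S).1 = 0 := hδ0
    rw [e0, e1, if_pos rfl, zero_add, zero_add]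
    congr 1
    refine Finset.sum_congr rfl fun i hi => ?_
    rw [if_neg (Finset.ne_of_mem_erase hi)]
    ring
  have hch : ∀ i, ∃ x : Fin (S.m i), i ≠ 0 → (∀ a, br S a = i → γ a = β a) ∨
      ∃ (hI : Iirr S i), hp S β (vI S ⟨i, hI⟩ x) = W S β i - W S γ i := by
    intro i
    by_cases hi : i = 0
    · exact ⟨⟨0, S.hm i⟩, fun h => absurd hi h⟩
    · rcases hmv i hi with h | ⟨hI, x, hx⟩
      · exact ⟨⟨0, S.hm i⟩, fun _ => Or.inl h⟩
      · exact ⟨x, fun _ => Or.inr ⟨hI, hx⟩⟩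
  choose c hc using hch
  -- there is an unmoved branch
  obtain ⟨r, hr, hru⟩ : ∃ r : {i // Iirr S i}, r.1 ≠ 0 ∧ ∀ a, br S a = r.1 → γ a = β a := by
    by_contra hcon
    push Not at hcon
    have := key (Function.update c 0 j) (by simp)
    rw [Finset.sum_eq_zero, add_zero] at this
    · linarith
    · intro i _
      by_cases hi : i = i0 S
      · rw [if_pos hi]
      · have hi0 := ne_i0 S i hi
        rw [if_neg hi, Function.update_of_ne hi0]
        rcases hc i.1 hi0 with h | ⟨hI, hx⟩
        · obtain ⟨a, ha, hb⟩ := hcon i hi0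
          exact absurd (h a ha) hb
        · have : hp S β (vI S ⟨i.1, hI⟩ (c i.1)) = hp S β (vI S i (c i.1)) := rfl
          rw [← this, hx, sub_self]
  have hWu : ∀ r : {i // Iirr S i}, r.1 ≠ 0 → (∀ a, br S a = r.1 → γ a = β a) →
      W S γ r.1 = N0 S γ := by
    intro r hr hru
    rw [W_congr S β γ r.1 hru, hLW r hr, hNγ]
  have huniq : ∀ i : {i // Iirr S i}, i.1 ≠ 0 → i ≠ r → ¬ ∀ a, br S a = i.1 → γ a = β a := by
    intro i hi hir hiu
    have h1 := hp_v0 S γ j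
    have h2 : W S γ i.1 + W S γ r.1 ≤ ∑ k, W S γ k := by
      rw [← Finset.sum_pair (f := fun i => W S γ i) (fun h => hir (Subtype.ext h))]
      exact Finset.sum_le_sum_of_subset_of_nonneg (Finset.subset_univ _)
        (fun i _ _ => W_nonneg S γ r2 i)
    rw [hWu i hi hiu, hWu r hr hru] at h2
    have h3 := tl_nonneg S γ r2 0 j 0
    have h4 : 0 ≤ ∑ j' : Fin (S.m 0), (dcnt S 0 j j' : ℤ) * γ (v0 S j') :=
      Finset.sum_nonneg fun _ _ => mul_nonneg (Int.natCast_nonneg _) (r2 _)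
    have h5 : γ (v0 S j) ≤ N0 S γ :=
      Finset.single_le_sum (f := fun j => γ (v0 S j)) (fun _ _ => r2 _) (Finset.mem_univ j)
    linarith
  have hre : ∀ j', hp S γ (vI S r j') + hp S γ (v0 S j) ≤ 0 := by
    intro j'
    have := key (Function.update (Function.update c 0 j) r.1 j')
      (by rw [Function.update_of_ne (Ne.symm hr)]; simp)
    rw [Finset.sum_eq_single r] at this
    · have hrne : r ≠ i0 S := fun h => hr (by rw [h]; rfl)
      rw [if_neg hrne, Function.update_self, W_congr S β γ r.1 hru] at this
      rw [hp_congr S β γ r.1 hr hru hNγ (vI S r j') rfl]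
      linarith
    · intro i _ hir
      by_cases hi : i = i0 S
      · rw [if_pos hi]
      · have hi0 := ne_i0 S i hi
        rw [if_neg hi, Function.update_of_ne (fun h => hir (Subtype.ext h)),
          Function.update_of_ne hi0]
        rcases hc i.1 hi0 with h | ⟨hI, hx⟩
        · exact absurd h (huniq i hi0 hir)
        · have : hp S β (vI S ⟨i.1, hI⟩ (c i.1)) = hp S β (vI S i (c i.1)) := rfl
          rw [← this, hx, sub_self]
    · intro h; exact absurd (Finset.mem_univ r) h
  obtain ⟨γ', q1, q2, q3, q4⟩ := phase2 S γ r2 r4' hl0 r hr (hWu r hr hru) j hj hre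
  exact ⟨γ', r1.trans' q1, fund_lem S γ' q2 (hne' γ' (r1.trans' q1)) q3 q4⟩

/-- If `β ∈ F̃` and `q(β) < 0`, then `β` is a positive root of the quiver `Q`. -/
theorem statement11 (S : Setup) (β : V S → ℤ) (hβ : quasiFund S β)
    (hq : qform S β < 0) : isPosRoot S β := by
  
  obtain ⟨γ, ⟨l, hl⟩, hf⟩ := main_lem S β hβ
  exact ⟨Or.inr ⟨l, γ, Or.inl hf, hl⟩, hβ.2.1⟩

end

end DS
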